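/- arXiv:1710.05124 — 6 statements merged into one kernel-verified Lean document; each statement's English description precedes it below -/
import Mathlib

section
/- Let S = k[x_1,…,x_n] be a polynomial ring over a field k and let M be an Artinian monomial ideal of S (that is, for every i there is some positive integer α with x_i^α ∈ M; equivalently codim(S/M) = n). If the n-th Betti number β_n(S/M) = 1, then M is a complete intersection of pure powers: M = (x_1^{α_1},…,x_n^{α_n}) for some positive integers α_1,…,α_n. -/
open CategoryTheory MvPolynomial

/-- The monomial in `k[x_1,…,x_n]` with exponent vector `a : Fin n → ℕ`. -/
noncomputable def expMon (k : Type) [Field k] {n : ℕ} (a : Fin n → ℕ) :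
    MvPolynomial (Fin n) k :=
  monomial (Finsupp.equivFunOnFinite.symm a) 1

/-- The monomial ideal generated by the monomials with exponent vectors in `A`. -/
noncomputable def monIdeal (k : Type) [Field k] {n : ℕ} (A : Set (Fin n → ℕ)) :
    Ideal (MvPolynomial (Fin n) k) :=
  Ideal.span (expMon k '' A)

/-- The projective dimension of a module, as a value in `ℕ∞`: the least `d` such that there is
a projective resolution vanishing in homological degrees `> d`. -/
noncomputable def projDim (R : Type) [Ring R] (N : ModuleCat R) : ℕ∞ :=
  sInf {d : ℕ∞ | ∃ P : ProjectiveResolution N,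
    ∀ i : ℕ, d < (i : ℕ∞) → Limits.IsZero (P.complex.X i)}

/-- `pd(S/M)`, the projective dimension of `S/M` as an `S`-module. -/
noncomputable def pdQuot (k : Type) [Field k] {n : ℕ} (M : Ideal (MvPolynomial (Fin n) k)) : ℕ∞ :=
  projDim (MvPolynomial (Fin n) k)
    (ModuleCat.of (MvPolynomial (Fin n) k) (MvPolynomial (Fin n) k ⧸ M))

/-- The `i`-th Betti number of `S/M`, i.e. `dim_k Tor_i^S(S/M, k)`, where the residue field
`k = S/(x_1,…,x_n)` and the `k`-vector space structure on `Tor` comes from the base field. -/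
noncomputable def betti (k : Type) [Field k] {n : ℕ} (M : Ideal (MvPolynomial (Fin n) k))
    (i : ℕ) : ℕ :=
  Module.finrank k
    ((ModuleCat.restrictScalars (algebraMap k (MvPolynomial (Fin n) k))).obj
      (((Tor (ModuleCat (MvPolynomial (Fin n) k)) i).obj
          (ModuleCat.of _ (MvPolynomial (Fin n) k ⧸ M))).obj
        (ModuleCat.of _ (MvPolynomial (Fin n) k ⧸
          Ideal.span (Set.range (X : Fin n → MvPolynomial (Fin n) k))))))

open TensorProduct in
/-- A projective resolution of `R ⧸ I`, given by elementary data. -/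
structure KRes (R : Type) [CommRing R] (I : Ideal R) where
  X : ℕ → ModuleCat.{0} R
  d : ∀ i, X (i + 1) →ₗ[R] X i
  p : X 0 →ₗ[R] R ⧸ I
  proj : ∀ i, Module.Projective R (X i)
  surj : Function.Surjective p
  exact0 : Function.Exact (d 0) p
  exactS : ∀ i, Function.Exact (d (i + 1)) (d i)

namespace KRes

variable {R : Type} [CommRing R] {I : Ideal R}

open TensorProduct

/-- Kernel of the differential leaving degree `j`, after tensoring with `N`. -/
noncomputable def topKer (P : KRes R I) (N : Type) [AddCommGroup N] [Module R N] :
    ∀ j, Submodule R (N ⊗[R] P.X j)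
  | 0 => ⊤
  | j + 1 => LinearMap.ker (LinearMap.lTensor N (P.d j))

/-- Terms of the cone of multiplication by a ring element. -/
def coneX (P : KRes R I) : ℕ → ModuleCat.{0} R
  | 0 => P.X 0
  | i + 1 => ModuleCat.of R (P.X i × P.X (i + 1))

/-- Differentials of the cone of multiplication by `x`. -/
def coneD (P : KRes R I) (x : R) : ∀ i, P.coneX (i + 1) →ₗ[R] P.coneX i
  | 0 => (x • LinearMap.fst R (P.X 0) (P.X 1) + (P.d 0).comp (LinearMap.snd R (P.X 0) (P.X 1)) :
      (P.X 0 × P.X 1) →ₗ[R] P.X 0)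
  | i + 1 => (LinearMap.prod (-((P.d i).comp (LinearMap.fst R (P.X (i+1)) (P.X (i+2)))))
      (x • LinearMap.fst R (P.X (i+1)) (P.X (i+2)) +
        (P.d (i+1)).comp (LinearMap.snd R (P.X (i+1)) (P.X (i+2)))) :
      (P.X (i+1) × P.X (i+2)) →ₗ[R] (P.X i × P.X (i+1)))

/-- The cone of multiplication by `x`, a resolution of `R ⧸ J`, `J = I + (x)`. -/
noncomputable def cone (P : KRes R I) (x : R) (J : Ideal R) (hIJ : I ≤ J) (hx : x ∈ J)
    (hJ : ∀ s ∈ J, ∃ r, s - r * x ∈ I) (hreg : ∀ f, x * f ∈ I → f ∈ I) : KRes R J where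
  X := P.coneX
  d := P.coneD x
  p := ((Submodule.factor hIJ).comp P.p : P.X 0 →ₗ[R] R ⧸ J)
  proj := by
    intro i
    cases i with
    | zero => exact P.proj 0
    | succ i =>
      have := P.proj i
      have := P.proj (i+1)
      exact (inferInstance : Module.Projective R (P.X i × P.X (i + 1)))
  surj := (Submodule.factor_surjective hIJ).comp P.surj
  exact0 := by
    intro (b : P.X 0)
    constructor
    · intro h
      change Submodule.factor hIJ (P.p b) = 0 at h
      obtain ⟨s, hs⟩ := Submodule.Quotient.mk_surjective _ (P.p b)
      rw [← hs] at h
      have hsJ : s ∈ J := (Submodule.Quotient.mk_eq_zero J).1 h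
      obtain ⟨r, hr⟩ := hJ s hsJ
      obtain ⟨q, hq⟩ := P.surj (Submodule.Quotient.mk r)
      have : P.p (b - x • q) = 0 := by
        rw [map_sub, map_smul, hq, ← hs, ← Submodule.Quotient.mk_smul, ← Submodule.Quotient.mk_sub,
          Submodule.Quotient.mk_eq_zero, smul_eq_mul, mul_comm]
        exact hr
      obtain ⟨c, hc⟩ := (P.exact0 _).1 this
      refine ⟨((q, c) : P.X 0 × P.X 1), ?_⟩
      change x • q + P.d 0 c = b
      rw [hc]; abel
    · rintro ⟨⟨q, c⟩, rfl⟩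
      change Submodule.factor hIJ (P.p (x • q + P.d 0 c)) = 0
      rw [map_add, P.exact0.apply_apply_eq_zero, add_zero, map_smul, map_smul]
      obtain ⟨r, hr⟩ := Submodule.Quotient.mk_surjective _ (Submodule.factor hIJ (P.p q))
      rw [← hr, ← Submodule.Quotient.mk_smul, Submodule.Quotient.mk_eq_zero]
      exact J.mul_mem_right _ hx
  exactS := by
    intro i
    -- key: the kernel of `x a + d b`
    cases i with
    | zero =>
      intro (ab : P.X 0 × P.X 1)
      obtain ⟨a, b⟩ := ab
      constructor
      · intro h
        change x • a + P.d 0 b = 0 at h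
        have h1 : P.p a = 0 := by
          have h2 := congrArg P.p h
          rw [map_add, P.exact0.apply_apply_eq_zero, add_zero, map_smul, map_zero] at h2
          obtain ⟨s, hs⟩ := Submodule.Quotient.mk_surjective _ (P.p a)
          rw [← hs, ← Submodule.Quotient.mk_smul, Submodule.Quotient.mk_eq_zero] at h2
          rw [← hs, Submodule.Quotient.mk_eq_zero]
          exact hreg s h2
        obtain ⟨a', rfl⟩ := (P.exact0 _).1 h1
        rw [← map_smul, ← map_add] at h
        obtain ⟨b', hb'⟩ := (P.exactS 0 _).1 h
        refine ⟨((-a', b') : P.X 1 × P.X 2), ?_⟩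
        change ((-(P.d 0 (-a')), x • (-a') + P.d 1 b') : P.X 0 × P.X 1) = _
        rw [hb', map_neg, neg_neg, smul_neg, neg_add_cancel_left]
      · rintro ⟨⟨a', b'⟩, h⟩
        change ((-(P.d 0 (a')), x • (a') + P.d 1 b') : P.X 0 × P.X 1) = _ at h
        change x • a + P.d 0 b = 0
        rw [Prod.mk.injEq] at h
        rw [← h.1, ← h.2, map_add, (P.exactS 0).apply_apply_eq_zero, map_smul, smul_neg]
        abel
    | succ i =>
      intro (ab : P.X (i+1) × P.X (i+2))
      obtain ⟨a, b⟩ := ab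
      constructor
      · intro h
        change ((-(P.d i a), x • a + P.d (i+1) b) : P.X i × P.X (i+1)) = (0, 0) at h
        rw [Prod.mk.injEq, neg_eq_zero] at h
        obtain ⟨h1, h⟩ := h
        obtain ⟨a', rfl⟩ := (P.exactS _ _).1 h1
        rw [← map_smul, ← map_add] at h
        obtain ⟨b', hb'⟩ := (P.exactS _ _).1 h
        refine ⟨((-a', b') : P.X (i+2) × P.X (i+3)), ?_⟩
        change ((-(P.d (i+1) (-a')), x • (-a') + P.d (i+2) b') : P.X (i+1) × P.X (i+2)) = _
        rw [hb', map_neg, neg_neg, smul_neg, neg_add_cancel_left]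
      · rintro ⟨⟨a', b'⟩, h⟩
        change ((-(P.d (i+1) (a')), x • (a') + P.d (i+2) b') : P.X (i+1) × P.X (i+2)) = _ at h
        change ((-(P.d i a), x • a + P.d (i+1) b) : P.X i × P.X (i+1)) = (0, 0)
        rw [Prod.mk.injEq] at h
        rw [← h.1, ← h.2, map_add, (P.exactS _).apply_apply_eq_zero, map_smul, smul_neg, map_neg,
          (P.exactS _).apply_apply_eq_zero]
        simp

/-- The invariant carried along the induction. -/
def Good (P : KRes R I) (N : Type) [AddCommGroup N] [Module R N] (j : ℕ) (T : Set R) : Prop :=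
  (∀ i, j < i → Subsingleton (P.X i)) ∧
    ∃ e : (N ⊗[R] P.X j) ≃ₗ[R] N, ∀ t, t ∈ P.topKer N j ↔ ∀ r ∈ T, r • e t = 0

lemma lTensor_prod_eq_zero {N A B C : Type} [AddCommGroup N] [Module R N] [AddCommGroup A]
    [Module R A] [AddCommGroup B] [Module R B] [AddCommGroup C] [Module R C]
    (f : A →ₗ[R] B) (g : A →ₗ[R] C) (u : N ⊗[R] A) :
    LinearMap.lTensor N (f.prod g) u = 0 ↔ LinearMap.lTensor N f u = 0 ∧
      LinearMap.lTensor N g u = 0 := by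
  constructor
  · intro h
    constructor
    · have := congrArg (LinearMap.lTensor N (LinearMap.fst R B C)) h
      rwa [← LinearMap.lTensor_comp_apply, LinearMap.fst_prod, map_zero] at this
    · have := congrArg (LinearMap.lTensor N (LinearMap.snd R B C)) h
      rwa [← LinearMap.lTensor_comp_apply, LinearMap.snd_prod, map_zero] at this
  · rintro ⟨h1, h2⟩
    have : f.prod g = (LinearMap.inl R B C).comp f + (LinearMap.inr R B C).comp g := by
      ext <;> simp
    rw [this, LinearMap.lTensor_add, LinearMap.add_apply, LinearMap.lTensor_comp_apply,
      LinearMap.lTensor_comp_apply, h1, h2, map_zero, map_zero, add_zero]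

lemma cone_good (P : KRes R I) (N : Type) [AddCommGroup N] [Module R N] (j : ℕ) (T : Set R)
    (hP : P.Good N j T) (x : R) (J : Ideal R) (hIJ : I ≤ J) (hx : x ∈ J)
    (hJ : ∀ s ∈ J, ∃ r, s - r * x ∈ I) (hreg : ∀ f, x * f ∈ I → f ∈ I) :
    (P.cone x J hIJ hx hJ hreg).Good N (j + 1) (insert x T) := by
  obtain ⟨h1, e, he⟩ := hP
  refine ⟨?_, ?_⟩
  · intro i hi
    obtain ⟨i, rfl⟩ : ∃ i', i = i' + 1 := ⟨i - 1, by omega⟩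
    have := h1 i (by omega)
    have := h1 (i + 1) (by omega)
    exact (inferInstance : Subsingleton (P.X i × P.X (i+1)))
  · have := h1 (j + 1) (by omega)
    let f : (P.X j × P.X (j+1)) ≃ₗ[R] P.X j :=
      LinearEquiv.ofLinearMap (LinearMap.fst R _ _) (LinearMap.inl R _ _)
        (by ext; simp) (by
          apply LinearMap.ext
          rintro ⟨a, b⟩
          exact Prod.ext rfl (Subsingleton.elim _ _))
    let F : (N ⊗[R] (P.X j × P.X (j+1))) ≃ₗ[R] N ⊗[R] P.X j := LinearEquiv.lTensor N f
    refine ⟨F.trans e, ?_⟩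
    intro (t : N ⊗[R] (P.X j × P.X (j+1)))
    obtain ⟨u, rfl⟩ := F.symm.surjective t
    have hu : F.symm u = LinearMap.lTensor N (LinearMap.inl R (P.X j) (P.X (j+1))) u := rfl
    have key : LinearMap.lTensor N (P.coneD x j) (F.symm u) = 0 ↔ u ∈ P.topKer N j ∧ x • u = 0 := by
      rw [hu]
      have hid : LinearMap.lTensor N (x • (LinearMap.id : P.X j →ₗ[R] P.X j)) u = x • u := by
        rw [LinearMap.lTensor_smul, LinearMap.smul_apply, LinearMap.lTensor_id_apply]
      cases j with
      | zero =>
        have h0 : (P.coneD x 0).comp (LinearMap.inl R (P.X 0) (P.X 1)) = x • LinearMap.id := by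
          apply LinearMap.ext
          intro a
          change x • a + P.d 0 0 = x • a
          simp
        have h2 := LinearMap.lTensor_comp_apply N (P.coneD x 0)
          (LinearMap.inl R (P.X 0) (P.X 1)) u
        rw [h0] at h2
        refine Iff.trans (Eq.congr_left h2.symm) ?_
        refine Iff.trans (Eq.congr_left hid) ?_
        exact ⟨fun h => ⟨Submodule.mem_top, h⟩, fun h => h.2⟩
      | succ j =>
        have h0 : (P.coneD x (j+1)).comp (LinearMap.inl R (P.X (j+1)) (P.X (j+2))) =
            LinearMap.prod (-(P.d j)) (x • LinearMap.id) := by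
          apply LinearMap.ext
          intro a
          change ((-(P.d j a), x • a + P.d (j+1) 0) : P.X j × P.X (j+1)) = (-(P.d j a), x • a)
          simp
        have h2 := LinearMap.lTensor_comp_apply N (P.coneD x (j+1))
          (LinearMap.inl R (P.X (j+1)) (P.X (j+2))) u
        rw [h0] at h2
        refine Iff.trans (Eq.congr_left h2.symm) ?_
        refine Iff.trans (lTensor_prod_eq_zero _ _ u) ?_
        rw [hid, LinearMap.lTensor_neg, LinearMap.neg_apply, neg_eq_zero]
        rfl
    refine Iff.trans key ?_
    rw [he]
    have h3 : (F.trans e) (F.symm u) = e u := by simp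
    have h4 : x • u = 0 ↔ x • e u = 0 := by
      rw [← map_smul, LinearEquiv.map_eq_zero_iff]
    rw [h4]
    erw [h3]
    simp [and_comm]

/-- The trivial resolution of `R ⧸ ⊥`. -/
noncomputable def base : KRes R (⊥ : Ideal R) where
  X := fun i => match i with
    | 0 => ModuleCat.of R R
    | _ + 1 => ModuleCat.of R PUnit
  d := fun _ => 0
  p := (Submodule.mkQ (⊥ : Ideal R) : R →ₗ[R] R ⧸ (⊥ : Ideal R))
  proj := by
    intro i
    cases i with
    | zero => exact (inferInstance : Module.Projective R R)
    | succ i => exact (inferInstance : Module.Projective R PUnit)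
  surj := Submodule.mkQ_surjective _
  exact0 := by
    intro (b : R)
    constructor
    · intro h
      exact ⟨0, ((Submodule.Quotient.mk_eq_zero _).1 h).symm⟩
    · rintro ⟨c, rfl⟩
      simp
  exactS := by
    intro i b
    exact ⟨fun _ => ⟨0, Subsingleton.elim (α := PUnit) _ _⟩, fun _ => rfl⟩

lemma base_good (N : Type) [AddCommGroup N] [Module R N] :
    (base (R := R)).Good N 0 ∅ := by
  refine ⟨?_, (TensorProduct.rid R N : (N ⊗[R] R) ≃ₗ[R] N), ?_⟩
  · intro i hi
    obtain ⟨i, rfl⟩ : ∃ i', i = i' + 1 := ⟨i - 1, by omega⟩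
    exact (inferInstance : Subsingleton PUnit)
  · intro t
    simp [topKer]

end KRes

lemma exists_kres (n : ℕ) (k : Type) [Field k] (N : Type) [AddCommGroup N]
    [Module (MvPolynomial (Fin n) k) N] (s : Finset (Fin n)) :
    ∃ P : KRes (MvPolynomial (Fin n) k)
      (Ideal.span ((MvPolynomial.X : Fin n → MvPolynomial (Fin n) k) '' (s : Set (Fin n)))),
      P.Good N s.card ((MvPolynomial.X : Fin n → MvPolynomial (Fin n) k) '' (s : Set (Fin n))) := by
  classical
  induction s using Finset.induction_on with
  | empty =>
    rw [Finset.coe_empty, Set.image_empty, Ideal.span_empty]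
    exact ⟨KRes.base, KRes.base_good N⟩
  | insert a s ha ih =>
    obtain ⟨P, hP⟩ := ih
    rw [Finset.coe_insert, Set.image_insert_eq, Finset.card_insert_of_notMem ha]
    refine ⟨_, P.cone_good N _ _ hP (X a) _ (Ideal.span_mono (Set.subset_insert _ _))
      (Ideal.subset_span (Set.mem_insert _ _)) ?_ ?_⟩
    · intro f hf
      obtain ⟨r, z, hz, rfl⟩ := Ideal.mem_span_insert.1 hf
      exact ⟨r, by simpa using hz⟩
    · intro f hf
      rw [MvPolynomial.mem_ideal_span_X_image] at hf ⊢
      intro m hm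
      obtain ⟨i, his, hi⟩ := hf (Finsupp.single a 1 + m) (by
        rw [MvPolynomial.mem_support_iff, MvPolynomial.coeff_X_mul]
        exact MvPolynomial.mem_support_iff.1 hm)
      refine ⟨i, his, ?_⟩
      have : a ≠ i := by rintro rfl; exact ha his
      simpa [Finsupp.single_apply, this] using hi

namespace KRes

variable {R : Type} [CommRing R] {I : Ideal R}

open TensorProduct

/-- The chain complex of a `KRes`. -/
noncomputable def cplx (P : KRes R I) : ChainComplex (ModuleCat.{0} R) ℕ :=
  ChainComplex.of P.X (fun i => ModuleCat.ofHom (P.d i)) (by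
    intro i
    ext a
    exact (P.exactS i).apply_apply_eq_zero a)

lemma cplx_d (P : KRes R I) (i : ℕ) : P.cplx.d (i + 1) i = ModuleCat.ofHom (P.d i) :=
  ChainComplex.of_d P.X (fun i => ModuleCat.ofHom (P.d i)) i

/-- The categorical projective resolution. -/
noncomputable def projRes (P : KRes R I) : ProjectiveResolution (ModuleCat.of R (R ⧸ I)) where
  complex := P.cplx
  projective := fun n => by
    have := P.proj n
    exact (IsProjective.iff_projective (R := R) (P.X n)).1 this
  π := (ChainComplex.toSingle₀Equiv _ _).symm ⟨ModuleCat.ofHom P.p, by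
    rw [P.cplx_d 0]
    ext a
    exact P.exact0.apply_apply_eq_zero a⟩
  quasiIso := ⟨fun n => by
    cases n
    · rw [ChainComplex.quasiIsoAt₀_iff, ShortComplex.quasiIso_iff_of_zeros']
      · have hE : (ShortComplex.mk (ModuleCat.ofHom (P.d 0)) (ModuleCat.ofHom P.p) (by
            ext a; exact P.exact0.apply_apply_eq_zero a)).Exact := by
          rw [ShortComplex.moduleCat_exact_iff]
          intro x hx
          exact (P.exact0 x).1 hx
        have hep : Epi (ModuleCat.ofHom P.p) := by
          rw [ModuleCat.epi_iff_surjective]; exact P.surj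
        refine (ShortComplex.exact_and_epi_g_iff_of_iso ?_).2 ⟨hE, hep⟩
        refine ShortComplex.isoMk (Iso.refl _) (Iso.refl _) (Iso.refl _) ?_ ?_
        · refine (Category.id_comp _).trans (Eq.trans ?_ (Category.comp_id _).symm)
          exact (P.cplx_d 0).symm
        · refine (Category.id_comp _).trans (Eq.trans ?_ (Category.comp_id _).symm)
          symm
          exact ChainComplex.toSingle₀Equiv_symm_apply_f_zero (C := P.cplx)
            (X := ModuleCat.of R (R ⧸ I)) (ModuleCat.ofHom P.p) _
      all_goals rfl
    · rename_i n
      rw [quasiIsoAt_iff_exactAt']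
      · rw [HomologicalComplex.exactAt_iff' _ (n + 1 + 1) (n + 1) n (by simp) (by simp)]
        rw [ShortComplex.moduleCat_exact_iff]
        intro x hx
        change P.cplx.d (n+1) n x = 0 at hx
        rw [P.cplx_d] at hx
        obtain ⟨y, hy⟩ := (P.exactS n x).1 hx
        refine ⟨y, ?_⟩
        change P.cplx.d (n+1+1) (n+1) y = x
        rw [P.cplx_d]
        exact hy
      · apply ChainComplex.exactAt_succ_single_obj⟩

lemma tor_equiv (P : KRes R I) (N : Type) [AddCommGroup N] [Module R N] (j : ℕ) (T : Set R)
    (hP : P.Good N j T) :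
    ∃ φ : (((Tor (ModuleCat R) j).obj (ModuleCat.of R N)).obj (ModuleCat.of R (R ⧸ I))) →ₗ[R] N,
      Function.Injective φ ∧ ∀ y, y ∈ LinearMap.range φ ↔ ∀ r ∈ T, r • y = 0 := by
  obtain ⟨h1, e, he⟩ := hP
  let F := (MonoidalCategory.tensoringLeft (ModuleCat R)).obj (ModuleCat.of R N)
  let K := (F.mapHomologicalComplex (ComplexShape.down ℕ)).obj P.cplx
  have i1 : (((Tor (ModuleCat R) j).obj (ModuleCat.of R N)).obj (ModuleCat.of R (R ⧸ I))) ≅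
    K.homology j := P.projRes.isoLeftDerivedObj F j
  have hz : K.d (j+1) j = 0 := by
    have : Subsingleton (P.X (j+1)) := h1 _ (by omega)
    have h2 : P.cplx.d (j+1) j = 0 := by
      rw [P.cplx_d]
      ext a
      rw [Subsingleton.elim a 0]; simp
    change F.map (P.cplx.d (j+1) j) = 0
    rw [h2, F.map_zero]
  have i2 : K.cycles j ≅ K.homology j := K.isoHomologyπ (j+1) j (by simp) hz
  let f : (((Tor (ModuleCat R) j).obj (ModuleCat.of R N)).obj (ModuleCat.of R (R ⧸ I))) ⟶ K.X j :=
    (i1 ≪≫ i2.symm).hom ≫ K.iCycles j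
  have hf : Function.Injective f := by
    rw [← ModuleCat.mono_iff_injective]
    infer_instance
  have hker : ∀ t : N ⊗[R] P.X j, t ∈ LinearMap.range f.hom ↔ t ∈ P.topKer N j := by
    have hr : ∀ t : K.X j, t ∈ LinearMap.range f.hom ↔ t ∈ LinearMap.range (K.iCycles j).hom := by
      intro t
      constructor
      · rintro ⟨a, rfl⟩
        exact ⟨(i1 ≪≫ i2.symm).hom a, rfl⟩
      · rintro ⟨a, rfl⟩
        refine ⟨(i1 ≪≫ i2.symm).inv a, ?_⟩
        change ((i1 ≪≫ i2.symm).inv ≫ (i1 ≪≫ i2.symm).hom ≫ K.iCycles j) a = _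
        rw [Iso.inv_hom_id_assoc]
    intro t
    refine Iff.trans (hr t) ?_
    cases j with
    | zero =>
      refine ⟨fun _ => Submodule.mem_top, fun _ => ?_⟩
      have : IsIso (K.iCycles 0) := K.isIso_iCycles 0 _ rfl (by simp)
      have h5 := (ModuleCat.epi_iff_surjective (K.iCycles 0)).1 inferInstance
      exact h5 t
    | succ j =>
      have hd : ∀ t : N ⊗[R] P.X (j+1), K.d (j+1) j t = LinearMap.lTensor N (P.d j) t := by
        intro t
        change F.map (P.cplx.d (j+1) j) t = _
        rw [P.cplx_d]
        rfl
      constructor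
      · rintro ⟨a, rfl⟩
        change LinearMap.lTensor N (P.d j) _ = 0
        refine (hd _).symm.trans ?_
        change (K.iCycles (j+1) ≫ K.d (j+1) j) a = 0
        simp
      · intro ht
        have ht : K.d (j+1) j t = 0 := (hd t).trans ht
        have hex : (ShortComplex.mk (K.iCycles (j+1)) (K.d (j+1) j) (by simp)).Exact :=
          ShortComplex.exact_of_f_is_kernel _ (K.cyclesIsKernel (j+1) j (by simp))
        rw [ShortComplex.moduleCat_exact_iff] at hex
        exact hex t ht
  refine ⟨e.toLinearMap.comp f.hom, e.injective.comp hf, ?_⟩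
  intro y
  obtain ⟨t, rfl⟩ := e.surjective y
  rw [← he, ← hker]
  constructor
  · rintro ⟨a, ha⟩
    exact ⟨a, e.injective ha⟩
  · rintro ⟨a, ha⟩
    exact ⟨a, congrArg e ha⟩

end KRes

lemma expMon_mem_iff (n : ℕ) (k : Type) [Field k] (A : Set (Fin n → ℕ))
    (f : MvPolynomial (Fin n) k) :
    f ∈ monIdeal k A ↔ ∀ m ∈ f.support, ∃ a ∈ A, ∀ i, a i ≤ m i := by
  have : monIdeal k A = Ideal.span ((fun s => monomial s (1 : k)) ''
      ((fun a : Fin n → ℕ => Finsupp.equivFunOnFinite.symm a) '' A)) := by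
    rw [Set.image_image]; rfl
  rw [this, mem_ideal_span_monomial_image]
  simp only [Set.exists_mem_image]
  rfl

/-- Combinatorial core: a unique socle line forces a complete intersection. -/
lemma ci_of_socle (n : ℕ) (k : Type) [Field k]
    (A : Set (Fin n → ℕ)) (M : Ideal (MvPolynomial (Fin n) k)) (hM : M = monIdeal k A)
    (hart : ∀ i : Fin n, ∃ α : ℕ, 0 < α ∧ (MvPolynomial.X i : MvPolynomial (Fin n) k) ^ α ∈ M)
    (hone : (1 : MvPolynomial (Fin n) k) ∉ M)
    (hsoc : ∀ f g : MvPolynomial (Fin n) k, f ∉ M → (∀ i, MvPolynomial.X i * f ∈ M) →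
      (∀ i, MvPolynomial.X i * g ∈ M) → ∃ c : k, g - C c * f ∈ M) :
    ∃ α : Fin n → ℕ, (∀ i, 0 < α i) ∧
      M = Ideal.span (Set.range fun i : Fin n =>
        (MvPolynomial.X i : MvPolynomial (Fin n) k) ^ α i) := by
  classical
  have hmon : ∀ m : Fin n →₀ ℕ, (monomial m (1 : k)) ∈ M ↔ ∃ a ∈ A, ∀ i, a i ≤ m i := by
    intro m
    rw [hM, expMon_mem_iff, support_monomial, if_neg one_ne_zero]
    simp
  have hmono : ∀ m m' : Fin n →₀ ℕ, m ≤ m' → monomial m (1 : k) ∈ M →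
      monomial m' (1 : k) ∈ M := by
    intro m m' h
    rw [hmon, hmon]
    rintro ⟨a, ha, h'⟩
    exact ⟨a, ha, fun i => (h' i).trans (h i)⟩
  have hXpow : ∀ (i : Fin n) (e : ℕ), (MvPolynomial.X i : MvPolynomial (Fin n) k) ^ e =
      monomial (Finsupp.single i e) 1 := fun i e => X_pow_eq_monomial
  let U : Set (Fin n →₀ ℕ) := {m | monomial m (1 : k) ∉ M}
  choose β hβ0 hβ using hart
  have hfin : U.Finite := by
    apply (Set.finite_Iic (Finsupp.equivFunOnFinite.symm β)).subset
    intro m hm i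
    by_contra hlt
    apply hm
    refine hmono (Finsupp.single i (β i)) m ?_ (by rw [← hXpow]; exact hβ i)
    rw [Finsupp.single_le_iff]
    exact (not_le.1 hlt).le
  have hmax : ∀ m ∈ U, ∃ b, m ≤ b ∧ Maximal (· ∈ U) b := fun m hm =>
    hfin.exists_le_maximal hm
  have hsocle : ∀ b, Maximal (· ∈ U) b → ∀ i, MvPolynomial.X i * monomial b (1 : k) ∈ M := by
    intro b hb i
    by_contra hcon
    have : (MvPolynomial.X i : MvPolynomial (Fin n) k) * monomial b (1 : k) =
        monomial (Finsupp.single i 1 + b) 1 := by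
      rw [MvPolynomial.X, monomial_mul, one_mul]
    rw [this] at hcon
    have h2 := hb.2 (y := Finsupp.single i 1 + b) hcon (by simp)
    have h3 := h2 i
    simp at h3
  have h0U : (0 : Fin n →₀ ℕ) ∈ U := hone
  obtain ⟨b, -, hb⟩ := hmax 0 h0U
  have huniq : ∀ b', Maximal (· ∈ U) b' → b' = b := by
    intro b' hb'
    by_contra hne
    obtain ⟨c, hc⟩ := hsoc _ _ hb.1 (hsocle b hb) (hsocle b' hb')
    apply hb'.1
    rw [hM, expMon_mem_iff] at hc
    rw [hmon]
    apply hc b'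
    rw [mem_support_iff, coeff_sub, coeff_C_mul, coeff_monomial, coeff_monomial, if_pos rfl,
      if_neg (Ne.symm hne)]
    simp
  have hle : ∀ m ∈ U, m ≤ b := by
    intro m hm
    obtain ⟨b', h1, h2⟩ := hmax m hm
    rwa [huniq b' h2] at h1
  refine ⟨fun i => b i + 1, fun i => Nat.succ_pos _, le_antisymm ?_ ?_⟩
  · rw [hM, monIdeal, Ideal.span_le]
    rintro _ ⟨a, ha, rfl⟩
    by_cases hab : ∀ i, a i ≤ b i
    · exact absurd ((hmon b).2 ⟨a, ha, hab⟩) hb.1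
    · push Not at hab
      obtain ⟨i, hi⟩ := hab
      have hdvd : (MvPolynomial.X i : MvPolynomial (Fin n) k) ^ (b i + 1) ∣ expMon k a := by
        rw [hXpow, expMon, monomial_dvd_monomial]
        refine ⟨Or.inr ?_, one_dvd _⟩
        rw [Finsupp.single_le_iff]
        exact hi
      exact Ideal.mem_of_dvd _ hdvd (Ideal.subset_span ⟨i, rfl⟩)
  · rw [Ideal.span_le]
    rintro _ ⟨i, rfl⟩
    by_contra hcon
    simp only [SetLike.mem_coe] at hcon
    rw [hXpow] at hcon
    have := hle _ hcon i
    simp at this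

/-- If `M` is an Artinian monomial ideal of `S = k[x_1,…,x_n]` with `β_n(S/M) = 1`, then
`M = (x_1^{α_1},…,x_n^{α_n})` for some positive integers `α_i`. -/
theorem artinian_bettiN_eq_one_imp_complete_intersection (n : ℕ) (k : Type) [Field k]
    (A : Set (Fin n → ℕ)) (M : Ideal (MvPolynomial (Fin n) k)) (hM : M = monIdeal k A)
    (hart : ∀ i : Fin n, ∃ α : ℕ, 0 < α ∧ (X i : MvPolynomial (Fin n) k) ^ α ∈ M)
    (hb : betti k M n = 1) :
    ∃ α : Fin n → ℕ, (∀ i, 0 < α i) ∧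
      M = Ideal.span (Set.range fun i : Fin n => (X i : MvPolynomial (Fin n) k) ^ α i) := by
  have hres := exists_kres n k (MvPolynomial (Fin n) k ⧸ M) Finset.univ
  rw [Finset.coe_univ, Set.image_univ, Finset.card_univ, Fintype.card_fin] at hres
  obtain ⟨P, hP⟩ := hres
  obtain ⟨φ, hφ, hr⟩ := P.tor_equiv _ _ _ hP
  rw [betti, finrank_eq_one_iff'] at hb
  obtain ⟨v, hv, hv'⟩ := hb
  have hlift : ∀ f : MvPolynomial (Fin n) k, (∀ i, MvPolynomial.X i * f ∈ M) →
      ∃ w, φ w = Submodule.Quotient.mk f := by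
    intro f hf
    have : (Submodule.Quotient.mk f : MvPolynomial (Fin n) k ⧸ M) ∈ LinearMap.range φ := by
      rw [hr]
      rintro _ ⟨i, rfl⟩
      rw [← Submodule.Quotient.mk_smul, Submodule.Quotient.mk_eq_zero]
      exact hf i
    exact this
  refine ci_of_socle n k A M hM hart ?_ ?_
  · intro h1
    apply hv
    apply hφ
    obtain ⟨f, hf⟩ := Submodule.Quotient.mk_surjective _ (φ v)
    refine Eq.trans ?_ (map_zero φ).symm
    refine hf.symm.trans ?_
    rw [Submodule.Quotient.mk_eq_zero]
    rw [(Ideal.eq_top_iff_one M).2 h1]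
    trivial
  · intro f g hf hXf hXg
    obtain ⟨w, hw⟩ := hlift f hXf
    obtain ⟨u, hu⟩ := hlift g hXg
    obtain ⟨c, hc⟩ := hv' w
    obtain ⟨d, hd⟩ := hv' u
    have hc' : (Submodule.Quotient.mk f : MvPolynomial (Fin n) k ⧸ M) = (C c : MvPolynomial (Fin n) k) • φ v := by
      rw [← hw, ← hc]
      exact φ.map_smul (C c) v
    have hd' : (Submodule.Quotient.mk g : MvPolynomial (Fin n) k ⧸ M) = (C d : MvPolynomial (Fin n) k) • φ v := by
      rw [← hu, ← hd]
      exact φ.map_smul (C d) v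
    have hc0 : c ≠ 0 := by
      rintro rfl
      apply hf
      rw [C_0, zero_smul, Submodule.Quotient.mk_eq_zero] at hc'
      exact hc'
    refine ⟨d * c⁻¹, ?_⟩
    rw [← Submodule.Quotient.mk_eq_zero, Submodule.Quotient.mk_sub, ← smul_eq_mul,
      Submodule.Quotient.mk_smul, hc', hd', smul_smul, ← C_mul, mul_assoc, inv_mul_cancel₀ hc0,
      mul_one, sub_self]
end

section
/- Let S = k[x_1,…,x_n] be a polynomial ring over a field k and let M be a monomial ideal with minimal monomial generating set G. Let 𝒟_M be the family of subsets D of G such that D is a dominant set of cardinality n and no element of G strongly divides lcm(D), and let L = {lcm(D) : D ∈ 𝒟_M}. Then the n-th Betti number of S/M equals the number of distinct monomials in L: β_n(S/M) = #L. -/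
open CategoryTheory MvPolynomial

/-- `l` strongly divides `l'`: whenever the exponent of `x_i` in `l` is nonzero,
it is strictly smaller than the exponent of `x_i` in `l'`. -/
def StronglyDivides {n : ℕ} (l l' : Fin n → ℕ) : Prop :=
  ∀ i, l i ≠ 0 → l i < l' i

/-- `m` is a dominant monomial in the set `L`: some variable occurs in `m` with an exponent
strictly larger than its exponent in every other element of `L`. -/
def DominantIn {n : ℕ} (L : Finset (Fin n → ℕ)) (m : Fin n → ℕ) : Prop :=
  ∃ j, ∀ m' ∈ L, m' ≠ m → m' j < m j

/-- `L` is a dominant set: each of its elements is dominant in `L`. -/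
def DominantSet {n : ℕ} (L : Finset (Fin n → ℕ)) : Prop :=
  ∀ m ∈ L, DominantIn L m


namespace Kosz

/-- Koszul sign. -/
def sgn {n : ℕ} (j : Fin n) (t : Finset (Fin n)) : ℤ := (-1) ^ (t.filter (· < j)).card

lemma sgn_insert {n : ℕ} (j l : Fin n) (t : Finset (Fin n)) (h : j ∉ t) :
    sgn l (insert j t) = if j < l then - sgn l t else sgn l t := by
  unfold sgn
  rw [Finset.filter_insert]
  split_ifs
  · rw [Finset.card_insert_of_notMem (by simp [h]), pow_succ]; ring
  · rfl

lemma sgn_sq {n : ℕ} (j : Fin n) (t : Finset (Fin n)) : sgn j t * sgn j t = 1 := by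
  unfold sgn
  rw [← mul_pow]; simp

section
variable {n : ℕ} {R : Type} [CommRing R] (x : Fin n → R)

/-- total Koszul differential -/
def D : (Finset (Fin n) → R) →ₗ[R] (Finset (Fin n) → R) where
  toFun F t := ∑ j ∈ tᶜ, sgn j t • (x j * F (insert j t))
  map_add' F G := by
    ext t
    simp [mul_add, Finset.sum_add_distrib]
  map_smul' c F := by
    ext t
    simp only [Pi.smul_apply, smul_eq_mul, RingHom.id_apply, Finset.mul_sum]
    refine Finset.sum_congr rfl fun j _ => ?_
    rw [mul_smul_comm]; congr 1; ring

lemma D_apply (F : Finset (Fin n) → R) (t) :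
    D x F t = ∑ j ∈ tᶜ, sgn j t • (x j * F (insert j t)) := rfl

lemma D_D (F : Finset (Fin n) → R) : D x (D x F) = 0 := by
  ext t
  simp only [D_apply, Finset.mul_sum, Finset.smul_sum, Pi.zero_apply]
  rw [Finset.sum_sigma']
  refine Finset.sum_involution (fun a _ => ⟨a.2, a.1⟩) ?_ ?_ ?_ ?_
  · rintro ⟨j, l⟩ h
    simp only [Finset.mem_sigma, Finset.mem_compl, Finset.mem_insert, not_or] at h
    obtain ⟨h1, h2, h3⟩ := h
    simp only [mul_smul_comm, smul_smul]
    rw [sgn_insert j l t h1, sgn_insert l j t h3, Finset.insert_comm l j]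
    rcases lt_or_gt_of_ne h2 with h | h
    · rw [if_neg h.not_gt, if_pos h, mul_left_comm (x l)]
      rw [← add_smul]; convert zero_smul ℤ _ using 2; ring
    · rw [if_neg h.not_gt, if_pos h, mul_left_comm (x l)]
      rw [← add_smul]; convert zero_smul ℤ _ using 2; ring
  · rintro ⟨j, l⟩ h _ h'
    simp only [Finset.mem_sigma, Finset.mem_compl, Finset.mem_insert, not_or] at h
    simp only [Sigma.mk.injEq, heq_eq_eq] at h'
    exact h.2.1 h'.1
  · rintro ⟨j, l⟩ h
    simp only [Finset.mem_sigma, Finset.mem_compl, Finset.mem_insert, not_or] at h ⊢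
    exact ⟨h.2.2, fun e => h.2.1 e.symm, h.1⟩
  · rintro ⟨j, l⟩ h
    rfl
end

section
variable {n : ℕ} (k : Type) [Field k]

/-- The operator `T_j`. -/
noncomputable def T (j : Fin n) : MvPolynomial (Fin n) k →ₗ[k] MvPolynomial (Fin n) k := by
  classical
  exact (basisMonomials (Fin n) k).constr k
    (fun a => if (∀ l < j, a l = 0) ∧ a j ≠ 0 then monomial (a - Finsupp.single j 1) 1 else 0)

open Classical in
lemma T_monomial (j : Fin n) (a : Fin n →₀ ℕ) : T k j (monomial a 1) =
    if (∀ l < j, a l = 0) ∧ a j ≠ 0 then monomial (a - Finsupp.single j 1) 1 else 0 := by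
  unfold T
  have := (basisMonomials (Fin n) k).constr_basis k 
    (fun a => if (∀ l < j, a l = 0) ∧ a j ≠ 0 then (monomial (a - Finsupp.single j 1) 1 : MvPolynomial (Fin n) k) else 0) a
  rw [coe_basisMonomials] at this
  exact this

lemma X_mul_mon (j : Fin n) (a : Fin n →₀ ℕ) :
    (X j * monomial a 1 : MvPolynomial (Fin n) k) = monomial (a + Finsupp.single j 1) 1 := by
  rw [X, monomial_mul, add_comm, one_mul]

variable {k}

lemma lin_ind {f g : MvPolynomial (Fin n) k →ₗ[k] MvPolynomial (Fin n) k}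
    (h : ∀ a, f (monomial a 1) = g (monomial a 1)) (p) : f p = g p := by
  have : f = g := (basisMonomials (Fin n) k).ext (by simpa using h)
  rw [this]

lemma T_X_lt {j m : Fin n} (h : j < m) (p : MvPolynomial (Fin n) k) : T k m (X j * p) = 0 := by
  refine lin_ind (f := T k m ∘ₗ LinearMap.mulLeft k (X j)) (g := 0) (fun a => ?_) p
  simp only [LinearMap.comp_apply, LinearMap.mulLeft_apply, X_mul_mon, T_monomial]
  rw [if_neg]
  · rfl
  · rintro ⟨h1, -⟩
    simpa using h1 j h

lemma T_X_gt {j m : Fin n} (h : m < j) (p : MvPolynomial (Fin n) k) :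
    T k m (X j * p) = X j * T k m p := by
  refine lin_ind (f := T k m ∘ₗ LinearMap.mulLeft k (X j)) (g := LinearMap.mulLeft k (X j) ∘ₗ T k m)
    (fun a => ?_) p
  simp only [LinearMap.comp_apply, LinearMap.mulLeft_apply, X_mul_mon, T_monomial]
  have e : ((∀ l < m, (a + Finsupp.single j 1 : Fin n →₀ ℕ) l = 0) ∧ (a + Finsupp.single j 1 : Fin n →₀ ℕ) m ≠ 0) ↔
      ((∀ l < m, a l = 0) ∧ a m ≠ 0) := by
    have : ∀ l ≤ m, (a + Finsupp.single j 1 : Fin n →₀ ℕ) l = a l := by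
      intro l hl
      simp [Finsupp.single_apply, (hl.trans_lt h).ne']
    rw [this m le_rfl]
    constructor
    · rintro ⟨h1, h2⟩
      exact ⟨fun l hl => by rw [← this l hl.le, h1 l hl], h2⟩
    · rintro ⟨h1, h2⟩
      exact ⟨fun l hl => by rw [this l hl.le, h1 l hl], h2⟩
  by_cases hc : (∀ l < m, a l = 0) ∧ a m ≠ 0
  · rw [if_pos hc, if_pos (e.2 hc), X_mul_mon]
    congr 2
    ext l
    simp only [Finsupp.coe_tsub, Finsupp.coe_add, Pi.sub_apply, Pi.add_apply, Finsupp.single_apply]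
    have := hc.2
    have := h.ne
    split_ifs with h1 h2 <;> subst_vars <;> first | omega | exact absurd rfl this
  · rw [if_neg hc, if_neg (fun h => hc (e.1 h)), mul_zero]

open Classical in
lemma T_X_self (m : Fin n) (a : Fin n →₀ ℕ) :
    T k m (X m * monomial a 1) = if (∀ l < m, a l = 0) then monomial a 1 else 0 := by
  simp only [X_mul_mon, T_monomial]
  congr 1
  · simp only [eq_iff_iff]
    constructor
    · rintro ⟨h1, -⟩ l hl
      have := h1 l hl
      simp [hl.ne'] at this
      exact this
    · intro h
      refine ⟨fun l hl => by simp [h l hl, Finsupp.single_apply, hl.ne'], by simp⟩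
  · simp

open Classical in
lemma X_T_self (m : Fin n) (a : Fin n →₀ ℕ) :
    X m * T k m (monomial a 1) = if ((∀ l < m, a l = 0) ∧ a m ≠ 0) then monomial a 1 else 0 := by
  simp only [T_monomial]
  split_ifs with h
  · rw [X_mul_mon]
    congr 2
    ext l
    simp only [Finsupp.coe_tsub, Finsupp.coe_add, Pi.sub_apply, Pi.add_apply, Finsupp.single_apply]
    have := h.2
    split_ifs <;> subst_vars <;> omega
  · simp

/-- telescoped identity below `m` -/
lemma sum_T_lt (m : Fin n) (p : MvPolynomial (Fin n) k) :
    (∑ j ∈ Finset.univ.filter (· < m), X j * T k j p) + T k m (X m * p) = p := by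
  refine lin_ind (f := (∑ j ∈ Finset.univ.filter (· < m), LinearMap.mulLeft k (X j) ∘ₗ T k j)
    + T k m ∘ₗ LinearMap.mulLeft k (X m)) (g := LinearMap.id) (fun a => ?_) p |> fun h => by
      simpa [LinearMap.sum_apply] using h
  simp only [LinearMap.add_apply, LinearMap.sum_apply, LinearMap.comp_apply,
    LinearMap.mulLeft_apply, LinearMap.id_apply, X_T_self, T_X_self]
  classical
  by_cases h : ∀ l < m, a l = 0
  · rw [if_pos h, Finset.sum_eq_zero, zero_add]
    intro j hj
    rw [if_neg]
    rintro ⟨-, h2⟩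
    exact h2 (h j (by simpa using hj))
  · rw [if_neg h, add_zero]
    push Not at h
    obtain ⟨l0, hl0, hal0⟩ := h
    have hne : (Finset.univ.filter (fun l => a l ≠ 0)).Nonempty := ⟨l0, by simpa using hal0⟩
    set j0 := (Finset.univ.filter (fun l => a l ≠ 0)).min' hne with hj0
    have h1 : a j0 ≠ 0 := by simpa using Finset.min'_mem _ hne
    have h2 : ∀ l, a l ≠ 0 → j0 ≤ l := fun l hl => Finset.min'_le _ _ (by simpa using hl)
    rw [Finset.sum_eq_single j0]
    · rw [if_pos]
      refine ⟨fun l hl => ?_, h1⟩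
      by_contra hc
      exact absurd (h2 l hc) (not_le.2 hl)
    · intro j _ hne
      rw [if_neg]
      rintro ⟨h3, h4⟩
      rcases lt_or_gt_of_ne hne with h | h
      · exact absurd (h2 j h4) (not_le.2 h)
      · exact h1 (h3 _ h)
    · intro h
      exact absurd ((h2 l0 hal0).trans_lt hl0) (by simpa using h)

lemma sum_T_all (p : MvPolynomial (Fin n) k) :
    (∑ j, X j * T k j p) = p - C (constantCoeff p) := by
  refine lin_ind (f := (∑ j, LinearMap.mulLeft k (X j) ∘ₗ T k j))
    (g := LinearMap.id - (Algebra.linearMap k _) ∘ₗ (lcoeff k 0)) (fun a => ?_) p |> fun h => by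
      simpa [LinearMap.sum_apply, constantCoeff_eq, algebraMap_eq] using h
  simp only [LinearMap.sub_apply, LinearMap.sum_apply, LinearMap.comp_apply,
    LinearMap.mulLeft_apply, LinearMap.id_apply, X_T_self]
  classical
  by_cases h : a = 0
  · subst h
    simp
  · have hne : (Finset.univ.filter (fun l => a l ≠ 0)).Nonempty := by
      by_contra hc
      apply h
      ext l
      by_contra hl
      exact hc ⟨l, by simpa using hl⟩
    set j0 := (Finset.univ.filter (fun l => a l ≠ 0)).min' hne with hj0
    have h1 : a j0 ≠ 0 := by simpa using Finset.min'_mem _ hne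
    have h2 : ∀ l, a l ≠ 0 → j0 ≤ l := fun l hl => Finset.min'_le _ _ (by simpa using hl)
    have hz : lcoeff k 0 (monomial a (1:k)) = 0 := by
      simp [coeff_monomial, h]
    rw [hz, map_zero, sub_zero, Finset.sum_eq_single j0]
    · rw [if_pos]
      refine ⟨fun l hl => ?_, h1⟩
      by_contra hc
      exact absurd (h2 l hc) (not_le.2 hl)
    · intro j _ hne
      rw [if_neg]
      rintro ⟨h3, h4⟩
      rcases lt_or_gt_of_ne hne with h | h
      · exact absurd (h2 j h4) (not_le.2 h)
      · exact h1 (h3 _ h)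
    · intro h
      simp at h

/-- The homotopy. -/
noncomputable def H (F : Finset (Fin n) → MvPolynomial (Fin n) k) (s : Finset (Fin n)) :
    MvPolynomial (Fin n) k :=
  if h : s.Nonempty then T k (s.min' h) (F (s.erase (s.min' h))) else 0

lemma H_insert (F : Finset (Fin n) → MvPolynomial (Fin n) k) (s : Finset (Fin n)) (m : Fin n)
    (h : ∀ j ∈ s, m < j) : H F (insert m s) = T k m (F s) := by
  unfold H
  rw [dif_pos ⟨m, by simp⟩]
  have e : (insert m s).min' ⟨m, by simp⟩ = m := by
    apply le_antisymm
    · exact Finset.min'_le _ _ (by simp)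
    · refine Finset.le_min' _ _ _ fun y hy => ?_
      rcases Finset.mem_insert.1 hy with h' | h'
      · exact h'.ge
      · exact (h y h').le
  rw [e, Finset.erase_insert]
  intro hm
  exact lt_irrefl _ (h m hm)

lemma sgn_lt (m : Fin n) (s : Finset (Fin n)) (h : ∀ j ∈ s, m < j) : sgn m s = 1 := by
  unfold sgn
  rw [Finset.filter_eq_empty_iff.2]
  · simp
  · intro j hj
    exact (h j hj).not_gt

lemma homotopy_empty (F : Finset (Fin n) → MvPolynomial (Fin n) k) :
    D X (H F) ∅ = F ∅ - C (constantCoeff (F ∅)) := by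
  rw [D_apply, ← sum_T_all]
  simp only [Finset.compl_empty]
  refine Finset.sum_congr rfl fun j _ => ?_
  rw [H_insert F ∅ j (by simp), sgn_lt _ _ (by simp), one_smul]

lemma homotopy_nonempty (F : Finset (Fin n) → MvPolynomial (Fin n) k) (t : Finset (Fin n))
    (ht : t.Nonempty) : D X (H F) t + H (D X F) t = F t := by
  obtain ⟨m, s, hms, rfl⟩ : ∃ m s, (∀ j ∈ s, m < j) ∧ t = insert m s := by
    refine ⟨t.min' ht, t.erase (t.min' ht), fun j hj => ?_, ?_⟩
    · exact Finset.min'_lt_of_mem_erase_min' _ _ hj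
    · rw [Finset.insert_erase (Finset.min'_mem _ _)]
  have hm : m ∉ s := fun h => lt_irrefl _ (hms m h)
  rw [H_insert _ _ _ hms, D_apply, D_apply]
  have split1 : (insert m s)ᶜ = Finset.univ.filter (· < m) ∪ (Finset.univ.filter (m < ·) \ s) := by
    ext j
    simp only [Finset.mem_compl, Finset.mem_insert, Finset.mem_union, Finset.mem_filter,
      Finset.mem_univ, true_and, Finset.mem_sdiff, not_or]
    constructor
    · rintro ⟨h1, h2⟩
      rcases lt_or_gt_of_ne h1 with h | h
      · exact Or.inl h
      · exact Or.inr ⟨h, h2⟩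
    · rintro (h | ⟨h1, h2⟩)
      · exact ⟨h.ne, fun h' => (hms j h').not_gt h⟩
      · exact ⟨h1.ne', h2⟩
  have split2 : sᶜ = insert m (insert m s)ᶜ := by
    ext j
    simp only [Finset.mem_compl, Finset.mem_insert, not_or]
    by_cases h : j = m
    · subst h; simpa using hm
    · simp [h]
  have disj : Disjoint (Finset.univ.filter (· < m)) (Finset.univ.filter (m < ·) \ s) := by
    rw [Finset.disjoint_left]
    intro j hj hj'
    simp only [Finset.mem_filter, Finset.mem_univ, true_and, Finset.mem_sdiff] at hj hj'
    exact hj.not_gt hj'.1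
  rw [split2, Finset.sum_insert (by simp), split1, Finset.sum_union disj, Finset.sum_union disj]
  rw [map_add, map_add, map_sum, map_sum, sgn_lt m s hms, one_smul]
  have e1 : ∑ j ∈ Finset.univ.filter (· < m), sgn j (insert m s) • (X j * H F (insert j (insert m s)))
      = ∑ j ∈ Finset.univ.filter (· < m), X j * T k j (F (insert m s)) := by
    refine Finset.sum_congr rfl fun j hj => ?_
    have hj : j < m := by simpa using hj
    have hh : ∀ l ∈ insert m s, j < l := by
      intro l hl
      rcases Finset.mem_insert.1 hl with h | h
      · rwa [h]
      · exact hj.trans (hms l h)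
    rw [sgn_lt _ _ hh, H_insert _ _ _ hh, one_smul]
  have e2 : ∑ j ∈ Finset.univ.filter (· < m), T k m (sgn j s • (X j * F (insert j s))) = 0 := by
    refine Finset.sum_eq_zero fun j hj => ?_
    have hj : j < m := by simpa using hj
    rw [map_zsmul, T_X_lt hj, smul_zero]
  have e3 : ∑ j ∈ Finset.univ.filter (m < ·) \ s, T k m (sgn j s • (X j * F (insert j s)))
      = - ∑ j ∈ Finset.univ.filter (m < ·) \ s,
        sgn j (insert m s) • (X j * H F (insert j (insert m s))) := by
    rw [← Finset.sum_neg_distrib]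
    refine Finset.sum_congr rfl fun j hj => ?_
    simp only [Finset.mem_filter, Finset.mem_univ, true_and, Finset.mem_sdiff] at hj
    rw [map_zsmul, T_X_gt hj.1, Finset.insert_comm, H_insert, sgn_insert m j s hm, if_pos hj.1,
      neg_smul, neg_neg]
    intro l hl
    rcases Finset.mem_insert.1 hl with h | h
    · rw [h]; exact hj.1
    · exact hms l h
  rw [e1, e2, e3]
  have := sum_T_lt m (F (insert m s))
  linear_combination this

end
end Kosz

namespace Kosz

section generic
variable {R : Type} [CommRing R] (X : ℕ → ModuleCat.{0} R) (d : ∀ i, X (i+1) ⟶ X i)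
  (sq : ∀ i, d (i+1) ≫ d i = 0)

lemma of_exactAt (hex : ∀ i, ∀ y, d i y = 0 → ∃ z, d (i+1) z = y) (i : ℕ) :
    (ChainComplex.of X d sq).ExactAt (i+1) := by
  rw [HomologicalComplex.exactAt_iff' _ (i + 1 + 1) (i + 1) i (by simp) (by simp)]
  rw [ShortComplex.moduleCat_exact_iff]
  intro y hy
  have e1 : (ChainComplex.of X d sq).d (i+1+1) (i+1) = d (i+1) := ChainComplex.of_d ..
  have e2 : (ChainComplex.of X d sq).d (i+1) i = d i := ChainComplex.of_d ..
  change (ChainComplex.of X d sq).d (i+1) i y = 0 at hy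
  change ∃ z, (ChainComplex.of X d sq).d (i+1+1) (i+1) z = y
  rw [e2] at hy
  rw [e1]
  exact hex i y hy

/-- generic projective resolution -/
noncomputable def mkRes (hex : ∀ i, ∀ y, d i y = 0 → ∃ z, d (i+1) z = y)
    (hp : ∀ i, Projective (X i)) (Z : ModuleCat.{0} R)
    (ε : X 0 ⟶ Z) (h0 : d 0 ≫ ε = 0) (hε : Function.Surjective ε)
    (hex0 : ∀ y, ε y = 0 → ∃ z, d 0 z = y) : ProjectiveResolution Z where
  complex := ChainComplex.of X d sq
  projective := hp
  π := (ChainComplex.toSingle₀Equiv _ _).symm ⟨ε, by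
    have e2 : (ChainComplex.of X d sq).d (0+1) 0 = d 0 := ChainComplex.of_d X d 0
    exact (congrArg (· ≫ ε) e2).trans h0⟩
  quasiIso := ⟨fun n => by
    cases n
    · rw [ChainComplex.quasiIsoAt₀_iff, ShortComplex.quasiIso_iff_of_zeros']
      · dsimp
        have e2 : (ChainComplex.of X d sq).d (0+1) 0 = d 0 := ChainComplex.of_d X d 0
        refine (ShortComplex.exact_and_epi_g_iff_of_iso (S₂ := ShortComplex.mk (d 0) ε h0) ?_).2
          ⟨?_, ?_⟩
        · refine ShortComplex.isoMk (Iso.refl _) (Iso.refl _) (Iso.refl _) ?_ ?_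
          · simp; exact e2.symm
          · refine (Category.id_comp _).trans (Eq.trans ?_ (Category.comp_id _).symm)
            exact (ChainComplex.toSingle₀Equiv_symm_apply_f_zero
              (C := ChainComplex.of X d sq) (X := Z) ε _).symm
        · rw [ShortComplex.moduleCat_exact_iff]
          exact hex0
        · exact (ModuleCat.epi_iff_surjective _).2 hε
      all_goals rfl
    · rw [quasiIsoAt_iff_exactAt']
      · apply of_exactAt _ _ _ hex
      · apply ChainComplex.exactAt_succ_single_obj⟩

end generic

section
variable {n : ℕ} {k : Type} [Field k]

/-- the index of Koszul degree `i` -/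
abbrev Ix (n i : ℕ) := {s : Finset (Fin n) // s.card = i}

/-- extension by zero -/
def ex (R : Type) [CommRing R] (n i : ℕ) : (Ix n i → R) →ₗ[R] (Finset (Fin n) → R) where
  toFun f s := if h : s.card = i then f ⟨s, h⟩ else 0
  map_add' f g := by ext s; dsimp; split_ifs <;> simp
  map_smul' c f := by ext s; dsimp; split_ifs <;> simp

/-- restriction -/
def rs (R : Type) [CommRing R] (n i : ℕ) : (Finset (Fin n) → R) →ₗ[R] (Ix n i → R) where
  toFun F s := F s.1
  map_add' _ _ := rfl
  map_smul' _ _ := rfl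

variable {R : Type} [CommRing R]

lemma ex_rs (i : ℕ) (F : Finset (Fin n) → R) (h : ∀ s, s.card ≠ i → F s = 0) :
    ex R n i (rs R n i F) = F := by
  ext s
  by_cases hs : s.card = i
  · simp [ex, rs, hs]
  · simp [ex, hs, h]

lemma ex_zero (i : ℕ) (f : Ix n i → R) (s) (h : s.card ≠ i) : ex R n i f s = 0 := by
  simp [ex, h]

lemma rs_ex (i : ℕ) (f : Ix n i → R) : rs R n i (ex R n i f) = f := by
  ext s
  simp [ex, rs, s.2]

lemma D_supp (x : Fin n → R) (i : ℕ) (F : Finset (Fin n) → R) (h : ∀ s, s.card ≠ i + 1 → F s = 0)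
    (t) (ht : t.card ≠ i) : D x F t = 0 := by
  rw [D_apply]
  refine Finset.sum_eq_zero fun j hj => ?_
  rw [h, mul_zero, smul_zero]
  rw [Finset.card_insert_of_notMem (by simpa using hj)]
  omega

/-- Koszul differential -/
def dK (x : Fin n → R) (i : ℕ) : (Ix n (i+1) → R) →ₗ[R] (Ix n i → R) :=
  rs R n i ∘ₗ D x ∘ₗ ex R n (i+1)

lemma ex_dK (x : Fin n → R) (i : ℕ) (f) : ex R n i (dK x i f) = D x (ex R n (i+1) f) := by
  unfold dK
  exact ex_rs i _ (D_supp x i _ (ex_zero _ f))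

lemma dK_dK (x : Fin n → R) (i : ℕ) : dK x i ∘ₗ dK x (i+1) = 0 := by
  refine LinearMap.ext fun f => ?_
  rw [LinearMap.comp_apply, ← rs_ex i (dK x i (dK x (i+1) f))]
  rw [ex_dK, ex_dK, D_D]; rfl

lemma H_supp (i : ℕ) (F : Finset (Fin n) → MvPolynomial (Fin n) k)
    (h : ∀ s, s.card ≠ i → F s = 0) (t) (ht : t.card ≠ i + 1) : H F t = 0 := by
  unfold H
  split_ifs with hne
  · rw [h, map_zero]
    rw [Finset.card_erase_of_mem (Finset.min'_mem _ _)]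
    have := hne.card_pos
    omega
  · rfl

lemma H_zero : H (0 : Finset (Fin n) → MvPolynomial (Fin n) k) = 0 := by
  ext1 t
  unfold H
  split_ifs <;> simp

lemma dK_exact (i : ℕ) (f : Ix n (i+1) → MvPolynomial (Fin n) k) (hf : dK MvPolynomial.X i f = 0) :
    ∃ g, dK MvPolynomial.X (i+1) g = f := by
  refine ⟨rs _ n (i+1+1) (H (ex _ n (i+1) f)), ?_⟩
  rw [← rs_ex (i+1) (dK _ _ _), ex_dK, ex_rs (i+1+1) _ (H_supp (i+1) _ (ex_zero _ f))]
  conv_rhs => rw [← rs_ex (i+1) f]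
  ext1 ⟨s, hs⟩
  change D MvPolynomial.X _ s = ex _ _ _ _ s
  have h0 : D MvPolynomial.X (ex _ n (i+1) f) = 0 := by rw [← ex_dK, hf, map_zero]
  have := homotopy_nonempty (ex _ n (i+1) f) s (Finset.card_pos.1 (by omega))
  rw [h0, H_zero] at this
  rw [← this]; simp

/-- augmentation -/
noncomputable def aug (n : ℕ) (k : Type) [Field k] : (Ix n 0 → MvPolynomial (Fin n) k) →ₗ[MvPolynomial (Fin n) k]
    (MvPolynomial (Fin n) k ⧸
          Ideal.span (Set.range (MvPolynomial.X : Fin n → MvPolynomial (Fin n) k))) :=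
  (Submodule.mkQ _) ∘ₗ LinearMap.proj (⟨∅, rfl⟩ : Ix n 0)

lemma aug_surj : Function.Surjective (aug n k) := by
  intro z
  obtain ⟨p, rfl⟩ := Submodule.mkQ_surjective _ z
  exact ⟨fun _ => p, rfl⟩

lemma aug_zero_iff (f) : aug n k f = 0 ↔
    f ⟨∅, rfl⟩ ∈ Ideal.span (Set.range (MvPolynomial.X : Fin n → MvPolynomial (Fin n) k)) := by
  unfold aug
  rw [LinearMap.comp_apply, LinearMap.proj_apply]
  exact Submodule.Quotient.mk_eq_zero _

lemma aug_d : aug n k ∘ₗ dK MvPolynomial.X 0 = 0 := by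
  refine LinearMap.ext fun f => ?_
  rw [LinearMap.comp_apply, LinearMap.zero_apply, aug_zero_iff]
  change D MvPolynomial.X (ex _ n (0+1) f) ∅ ∈ _
  rw [D_apply]
  refine Submodule.sum_mem _ fun j _ => ?_
  refine zsmul_mem ?_ _
  exact Ideal.mul_mem_right _ _ (Ideal.subset_span ⟨j, rfl⟩)

lemma aug_exact (f) (hf : aug n k f = 0) : ∃ g, dK MvPolynomial.X 0 g = f := by
  rw [aug_zero_iff] at hf
  have hc : constantCoeff (f ⟨∅, rfl⟩) = 0 := by
    have : Ideal.span (Set.range (MvPolynomial.X : Fin n → MvPolynomial (Fin n) k)) ≤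
        RingHom.ker (constantCoeff (R := k) (σ := Fin n)) := by
      rw [Ideal.span_le]
      rintro _ ⟨j, rfl⟩
      simp [RingHom.mem_ker]
    exact this hf
  refine ⟨rs _ n 1 (H (ex _ n 0 f)), ?_⟩
  rw [← rs_ex 0 (dK _ _ _), ex_dK, ex_rs (0+1) _ (H_supp 0 _ (ex_zero _ f))]
  ext1 ⟨s, hs⟩
  obtain rfl := Finset.card_eq_zero.1 hs
  change D MvPolynomial.X (H (ex _ n 0 f)) ∅ = _
  rw [homotopy_empty]
  have : ex _ n 0 f ∅ = f ⟨∅, rfl⟩ := by simp [ex]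
  rw [this, hc]; simp

/-- Koszul resolution -/
noncomputable def kRes (n : ℕ) (k : Type) [Field k] : ProjectiveResolution
    (ModuleCat.of (MvPolynomial (Fin n) k) (MvPolynomial (Fin n) k ⧸
          Ideal.span (Set.range (MvPolynomial.X : Fin n → MvPolynomial (Fin n) k)))) :=
  mkRes (fun i => ModuleCat.of (MvPolynomial (Fin n) k) (Ix n i → MvPolynomial (Fin n) k))
    (fun i => ModuleCat.ofHom (dK MvPolynomial.X i))
    (fun i => by rw [← ModuleCat.ofHom_comp, dK_dK]; rfl)
    (fun i y hy => dK_exact i y hy)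
    (fun i => ModuleCat.projective_of_free (Pi.basisFun _ _))
    _ (ModuleCat.ofHom (aug n k))
    (by rw [← ModuleCat.ofHom_comp, aug_d]; rfl)
    aug_surj aug_exact

end
end Kosz

namespace Kosz
open scoped TensorProduct
section
variable {n : ℕ} {k : Type} [Field k]

/-- socle -/
def soc (R : Type) [CommRing R] (x : Fin n → R) (N : Type) [AddCommGroup N] [Module R N] :
    Submodule R N where
  carrier := {v | ∀ i, x i • v = 0}
  add_mem' ha hb i := by rw [smul_add, ha i, hb i, add_zero]
  zero_mem' i := smul_zero _
  smul_mem' c v hv i := by rw [smul_comm, hv i, smul_zero]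

section tens
variable {R : Type} [CommRing R] (x : Fin n → R) (N : Type) [AddCommGroup N] [Module R N]

/-- evaluation extended by zero, on `N`-valued functions -/
def exN (i : ℕ) (f : Ix n i → N) (s : Finset (Fin n)) : N := if h : s.card = i then f ⟨s, h⟩ else 0

lemma lT (i : ℕ) (z : N ⊗[R] (Ix n (i+1) → R)) (t : Ix n i) :
    TensorProduct.piScalarRight R R N (Ix n i) ((dK x i).lTensor N z) t =
      ∑ j ∈ t.1ᶜ, sgn j t.1 • x j • exN N (i+1) (TensorProduct.piScalarRight R R N _ z)
        (insert j t.1) := by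
  induction z using TensorProduct.induction_on with
  | zero => simp [exN]
  | add a b ha hb =>
    rw [map_add, map_add, Pi.add_apply, ha, hb, ← Finset.sum_add_distrib]
    refine Finset.sum_congr rfl fun j _ => ?_
    rw [← smul_add, ← smul_add, map_add]
    congr 2
    unfold exN
    split_ifs <;> simp
  | tmul v f =>
    rw [LinearMap.lTensor_tmul]
    simp only [TensorProduct.piScalarRight_apply, TensorProduct.piScalarRightHom_tmul]
    change (D x (ex R n (i+1) f) t.1) • v = _
    rw [D_apply, Finset.sum_smul]
    refine Finset.sum_congr rfl fun j _ => ?_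
    rw [smul_assoc, mul_smul]
    congr 2
    unfold exN ex
    dsimp
    split_ifs <;> simp

/-- top index -/
def top (n : ℕ) : Ix n n := ⟨Finset.univ, by simp⟩

instance : Unique (Ix n n) where
  default := top n
  uniq s := by
    apply Subtype.ext
    have := s.2
    exact Finset.eq_univ_of_card _ (by simpa using this)

/-- top component -/
noncomputable def topEquiv (n : ℕ) (R : Type) [CommRing R] (N : Type) [AddCommGroup N] [Module R N] :
    N ⊗[R] (Ix n n → R) ≃ₗ[R] N :=
  TensorProduct.piScalarRight R R N (Ix n n) ≪≫ₗ LinearEquiv.funUnique (Ix n n) R N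

lemma topEquiv_apply (z : N ⊗[R] (Ix n n → R)) :
    topEquiv n R N z = TensorProduct.piScalarRight R R N (Ix n n) z (top n) := rfl

lemma ker_iff {m : ℕ} (x : Fin (m+1) → R) (z : N ⊗[R] (Ix (m+1) (m+1) → R)) :
    (dK x m).lTensor N z = 0 ↔ topEquiv (m+1) R N z ∈ soc R x N := by
  have key : ∀ j : Fin (m+1), ∀ t : Ix (m+1) m, t.1 = {j}ᶜ →
      TensorProduct.piScalarRight R R N (Ix (m+1) m) ((dK x m).lTensor N z) t =
        sgn j t.1 • x j • topEquiv (m+1) R N z := by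
    intro j t ht
    rw [lT, ht, compl_compl, Finset.sum_singleton]
    congr 2
    have : insert j ({j}ᶜ : Finset (Fin (m+1))) = Finset.univ := by
      ext l; by_cases h : l = j <;> simp [h]
    rw [this, topEquiv_apply]
    simp [exN, top]
  constructor
  · intro h j
    have hc : ({j}ᶜ : Finset (Fin (m+1))).card = m := by simp [Finset.card_compl]
    have := key j ⟨_, hc⟩ rfl
    rw [h, map_zero, Pi.zero_apply] at this
    have h2 := congrArg (fun y => sgn j ({j}ᶜ : Finset (Fin (m+1))) • y) this
    simp only [smul_smul, smul_zero] at h2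
    rw [sgn_sq, one_smul] at h2
    exact h2.symm
  · intro h
    apply (TensorProduct.piScalarRight R R N (Ix (m+1) m)).injective
    rw [map_zero]
    ext1 t
    have : (t.1ᶜ).card = 1 := by
      have := t.2
      simp [Finset.card_compl, this]
    obtain ⟨j, hj⟩ := Finset.card_eq_one.1 this
    rw [key j t (by rw [← hj, compl_compl]), h j, smul_zero]; rfl
end tens

/-- transport of a kernel along an equivalence -/
def kerEquiv {R A B N : Type} [CommRing R] [AddCommGroup A] [Module R A] [AddCommGroup B]
    [Module R B] [AddCommGroup N] [Module R N] (g : A →ₗ[R] B) (e : A ≃ₗ[R] N)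
    (p : Submodule R N) (h : ∀ z, g z = 0 ↔ e z ∈ p) : LinearMap.ker g ≃ₗ[R] p :=
  e.ofSubmodules (LinearMap.ker g) p (by
    ext v
    constructor
    · rintro ⟨z, hz, rfl⟩
      exact (h z).1 hz
    · intro hv
      exact ⟨e.symm v, (h _).2 (by simpa using hv), by simp⟩)

lemma kRes_d (m i : ℕ) : (kRes m k).complex.d (i+1) i = ModuleCat.ofHom (dK MvPolynomial.X i) :=
  ChainComplex.of_d
    (fun i => ModuleCat.of (MvPolynomial (Fin m) k) (Ix m i → MvPolynomial (Fin m) k))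
    (fun i => ModuleCat.ofHom (dK MvPolynomial.X i)) i

/-- kernel comparison, all `n` -/
lemma tor_equiv (N : Type) [AddCommGroup N] [Module (MvPolynomial (Fin n) k) N] :
    Nonempty ((((Tor (ModuleCat (MvPolynomial (Fin n) k)) n).obj
          (ModuleCat.of _ N)).obj
        (ModuleCat.of _ (MvPolynomial (Fin n) k ⧸
          Ideal.span (Set.range (X : Fin n → MvPolynomial (Fin n) k))))) ≃ₗ[MvPolynomial (Fin n) k]
      soc (MvPolynomial (Fin n) k) X N) := by
  let F := (MonoidalCategory.tensoringLeft (ModuleCat (MvPolynomial (Fin n) k))).obj (ModuleCat.of _ N)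
  let C := (F.mapHomologicalComplex (ComplexShape.down ℕ)).obj (kRes n k).complex
  have hnext : (ComplexShape.down ℕ).next n = n - 1 := by
    cases n
    · simp
    · simp
  let i1 : ((Tor (ModuleCat (MvPolynomial (Fin n) k)) n).obj (ModuleCat.of _ N)).obj
        (ModuleCat.of _ (MvPolynomial (Fin n) k ⧸
          Ideal.span (Set.range (X : Fin n → MvPolynomial (Fin n) k)))) ≅ C.homology n :=
    (kRes n k).isoLeftDerivedObj F n
  let i2 : C.homology n ≅ (C.sc' (n+1) n (n-1)).homology := C.homologyIsoSc' _ _ _ (by simp) hnext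
  have hf : (C.sc' (n+1) n (n-1)).f = 0 := by
    have hz : Limits.IsZero ((kRes n k).complex.X (n+1)) := by
      have : IsEmpty (Ix n (n+1)) := ⟨fun s => by
        have h1 := s.2
        have h2 := Finset.card_le_univ s.1
        simp at h2
        omega⟩
      change Limits.IsZero (ModuleCat.of (MvPolynomial (Fin n) k) (Ix n (n+1) → MvPolynomial (Fin n) k))
      exact ModuleCat.isZero_of_subsingleton _
    exact (F.map_isZero hz).eq_of_src _ _
  let i3 := (C.sc' (n+1) n (n-1)).asIsoHomologyπ hf
  let i4 := (C.sc' (n+1) n (n-1)).moduleCatCyclesIso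
  let e := (i1 ≪≫ i2 ≪≫ i3.symm ≪≫ i4).toLinearEquiv
  refine ⟨e.trans (kerEquiv _ (topEquiv n (MvPolynomial (Fin n) k) N) _ ?_)⟩
  intro z
  clear e i4 i3 hf i2 i1 hnext
  cases n with
  | zero =>
    have h1 : (C.sc' (0+1) 0 (0-1)).g = 0 := C.shape _ _ (by simp)
    rw [h1]
    constructor
    · intro _ i
      exact i.elim0
    · intro _; rfl
  | succ m =>
    have h1 : (C.sc' (m+1+1) (m+1) (m+1-1)).g = F.map (ModuleCat.ofHom (dK MvPolynomial.X m)) := by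
      change F.map ((kRes (m+1) k).complex.d (m+1) m) = _
      rw [kRes_d]; rfl
    rw [h1]
    exact ker_iff N MvPolynomial.X z
end
end Kosz
namespace Kosz
section
variable {n : ℕ} {k : Type} [Field k]

/-- The socle exponents. -/
def U (G : Finset (Fin n → ℕ)) : Set (Fin n → ℕ) :=
  {u | (∀ g ∈ G, ¬ g ≤ u) ∧ ∀ i, ∃ g ∈ G, g ≤ u + Pi.single i 1}

lemma mem_monIdeal (G : Finset (Fin n → ℕ)) (p : MvPolynomial (Fin n) k) :
    p ∈ monIdeal k (G : Set (Fin n → ℕ)) ↔ ∀ a ∈ p.support, ∃ g ∈ G, g ≤ ⇑a := by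
  unfold monIdeal
  have : expMon k '' (G : Set (Fin n → ℕ)) = (fun s => monomial s (1:k)) ''
      (Finsupp.equivFunOnFinite.symm '' (G : Set (Fin n → ℕ))) := by
    rw [Set.image_image]; rfl
  rw [this, mem_ideal_span_monomial_image]
  simp only [Set.mem_image, Finset.mem_coe, exists_exists_and_eq_and]
  rfl

lemma coeff_expMon (u : Fin n → ℕ) (a : Fin n →₀ ℕ) [Decidable (u = ⇑a)] :
    coeff a (expMon k u) = if u = ⇑a then 1 else 0 := by
  classical
  unfold expMon
  rw [coeff_monomial]
  congr 1
  rw [eq_iff_iff, Equiv.symm_apply_eq]; rfl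

lemma mk_zero_iff (G : Finset (Fin n → ℕ)) (p : MvPolynomial (Fin n) k) :
    (Ideal.Quotient.mk (monIdeal k (G : Set (Fin n → ℕ))) p) = 0 ↔
      ∀ a ∈ p.support, ∃ g ∈ G, g ≤ ⇑a := by
  rw [Ideal.Quotient.eq_zero_iff_mem, mem_monIdeal]

lemma indep (G : Finset (Fin n → ℕ)) [Fintype (U G)] :
    LinearIndependent k (fun u : U G =>
      (Ideal.Quotient.mkₐ k (monIdeal k (G : Set (Fin n → ℕ))) (expMon k u.1))) := by
  classical
  rw [Fintype.linearIndependent_iff]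
  intro c hc u
  rw [← Finset.sum_congr rfl (fun u _ => map_smul (Ideal.Quotient.mkₐ k _) (c u) (expMon k u.1)),
    ← map_sum] at hc
  have hc' := (mk_zero_iff G _).1 hc
  by_contra h
  obtain ⟨g, hg, hgu⟩ := hc' (Finsupp.equivFunOnFinite.symm u.1) (by
    rw [mem_support_iff, coeff_sum]
    rw [Finset.sum_eq_single u]
    · rw [coeff_smul, coeff_expMon]
      simpa using h
    · intro v _ hv
      rw [coeff_smul, coeff_expMon, if_neg, smul_zero]
      intro e
      exact hv (Subtype.ext e)
    · simp)
  exact u.2.1 g hg hgu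

lemma span_eq (G : Finset (Fin n → ℕ)) :
    Submodule.span k (Set.range (fun u : U G =>
      (Ideal.Quotient.mkₐ k (monIdeal k (G : Set (Fin n → ℕ))) (expMon k u.1)))) =
    (soc (MvPolynomial (Fin n) k) X
      (MvPolynomial (Fin n) k ⧸ monIdeal k (G : Set (Fin n → ℕ)))).restrictScalars k := by
  classical
  apply le_antisymm
  · rw [Submodule.span_le]
    rintro _ ⟨u, rfl⟩ i
    change Ideal.Quotient.mk (monIdeal k (G : Set (Fin n → ℕ))) (X i * expMon k u.1) = 0
    rw [mk_zero_iff]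
    intro a ha
    obtain ⟨g, hg, h⟩ := u.2.2 i
    refine ⟨g, hg, ?_⟩
    unfold expMon at ha
    rw [X_mul_mon] at ha
    have := support_monomial_subset ha
    rw [Finset.mem_singleton] at this
    subst this
    convert h using 1
    ext l
    simp [Finsupp.single_apply, Pi.single_apply, eq_comm]
  · intro v hv
    obtain ⟨p, rfl⟩ := Ideal.Quotient.mk_surjective v
    rw [p.as_sum, map_sum]
    refine Submodule.sum_mem _ fun a ha => ?_
    by_cases hM : ∃ g ∈ G, g ≤ ⇑a
    · have : Ideal.Quotient.mk (monIdeal k (G : Set (Fin n → ℕ))) (monomial a (coeff a p)) = 0 := by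
        rw [mk_zero_iff]
        intro b hb
        have := support_monomial_subset hb
        rw [Finset.mem_singleton] at this
        subst this
        exact hM
      rw [this]
      exact Submodule.zero_mem _
    · have hU : ⇑a ∈ U G := by
        refine ⟨fun g hg h => hM ⟨g, hg, h⟩, fun i => ?_⟩
        have hi : Ideal.Quotient.mk (monIdeal k (G : Set (Fin n → ℕ))) (X i * p) = 0 := hv i
        rw [mk_zero_iff] at hi
        obtain ⟨g, hg, h⟩ := hi (Finsupp.single i 1 + a) (by
          rw [mem_support_iff, coeff_X_mul]
          exact mem_support_iff.1 ha)
        refine ⟨g, hg, ?_⟩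
        convert h using 1
        ext l
        simp [Finsupp.single_apply, Pi.single_apply, eq_comm, add_comm]
      have e : monomial a (coeff a p) = coeff a p • expMon k (⇑a) := by
        unfold expMon
        rw [smul_monomial, smul_eq_mul, mul_one]
        rw [Finsupp.equivFunOnFinite_symm_coe]
      rw [e]
      have : Ideal.Quotient.mk (monIdeal k (G : Set (Fin n → ℕ))) (coeff a p • expMon k (⇑a)) =
          coeff a p • Ideal.Quotient.mkₐ k (monIdeal k (G : Set (Fin n → ℕ))) (expMon k (⇑a)) :=
        map_smul (Ideal.Quotient.mkₐ k _) _ _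
      rw [this]
      exact Submodule.smul_mem _ _ (Submodule.subset_span ⟨⟨_, hU⟩, rfl⟩)

lemma betti_eq (G : Finset (Fin n → ℕ)) (hfin : (U G).Finite) :
    betti k (monIdeal k (G : Set (Fin n → ℕ))) n = (U G).ncard := by
  have := hfin.fintype
  obtain ⟨e⟩ := tor_equiv (n := n) (k := k)
    (MvPolynomial (Fin n) k ⧸ monIdeal k (G : Set (Fin n → ℕ)))
  have h1 : Module.finrank k ((soc (MvPolynomial (Fin n) k) X
      (MvPolynomial (Fin n) k ⧸ monIdeal k (G : Set (Fin n → ℕ)))).restrictScalars k) =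
      (U G).ncard := by
    rw [← span_eq, finrank_span_eq_card (indep G), ← Nat.card_coe_set_eq, Nat.card_eq_fintype_card]
  rw [← h1]
  unfold betti
  refine LinearEquiv.finrank_eq
    { toFun := fun z => (e z : soc (MvPolynomial (Fin n) k) X
        (MvPolynomial (Fin n) k ⧸ monIdeal k (G : Set (Fin n → ℕ))))
      invFun := fun z => e.symm z
      left_inv := fun z => e.symm_apply_apply z
      right_inv := fun z => e.apply_symm_apply z
      map_add' := fun a b => map_add e a b
      map_smul' := fun c a => ?_ }
  refine (map_smul e (algebraMap k (MvPolynomial (Fin n) k) c) a).trans ?_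
  apply Subtype.ext
  exact algebraMap_smul _ c _

lemma strong_iff (g u : Fin n → ℕ) : StronglyDivides g (u + 1) ↔ g ≤ u := by
  unfold StronglyDivides
  constructor
  · intro h i
    change g i ≤ u i
    by_cases h0 : g i = 0
    · omega
    · have := h i h0
      simp at this
      omega
  · intro h i _
    have := h i
    simp
    omega

open Classical in
lemma L_eq (G : Finset (Fin n → ℕ)) :
    (((G.powerset.filter fun D => DominantSet D ∧ D.card = n ∧
          ∀ g ∈ G, ¬StronglyDivides g (D.sup id)).image fun D => D.sup id : Finset (Fin n → ℕ)) :
      Set (Fin n → ℕ)) = (fun u => u + 1) '' U G := by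
  ext l
  simp only [Finset.coe_image, Finset.coe_filter, Finset.mem_powerset, Set.mem_image,
    Set.mem_ofPred_eq]
  constructor
  · rintro ⟨D, ⟨hDG, hdom, hcard, hstr⟩, rfl⟩
    rcases Nat.eq_zero_or_pos n with rfl | hn
    · exact ⟨D.sup id, ⟨fun g hg _ => hstr g hg (fun i => i.elim0), fun i => i.elim0⟩,
        funext fun i => i.elim0⟩
    have : Nonempty (Fin n) := ⟨⟨0, hn⟩⟩
    choose! f hf using hdom
    have finj : Set.InjOn f D := by
      intro a ha b hb hab
      by_contra hne
      have h1 := hf a ha b hb (Ne.symm hne)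
      have h2 := hf b hb a ha hne
      rw [hab] at h1
      omega
    have himg : D.image f = Finset.univ := by
      apply Finset.eq_univ_of_card
      rw [Finset.card_image_of_injOn finj, hcard, Fintype.card_fin]
    have hsup : ∀ j, (D.sup id) j = D.sup (fun m => m j) := fun j => by
      rw [Finset.sup_apply]; rfl
    have hval : ∀ m ∈ D, (D.sup id) (f m) = m (f m) := by
      intro m hm
      rw [hsup]
      apply le_antisymm
      · refine Finset.sup_le fun b hb => ?_
        by_cases h : b = m
        · rw [h]
        · exact (hf m hm b hb h).le
      · exact Finset.le_sup (f := fun b : Fin n → ℕ => b (f m)) hm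
    have hle : ∀ m ∈ D, ∀ j, m j ≤ (D.sup id) j := fun m hm j => by
      rw [hsup]
      exact Finset.le_sup (f := fun b : Fin n → ℕ => b j) hm
    have hsurj : ∀ j, ∃ m ∈ D, f m = j := by
      intro j
      have : j ∈ D.image f := by rw [himg]; simp
      simpa using this
    have hpos : ∀ j, 1 ≤ (D.sup id) j := by
      intro j
      by_contra h0
      have h0 : (D.sup id) j = 0 := by omega
      obtain ⟨m, hm, rfl⟩ := hsurj j
      apply hstr m (hDG hm)
      intro i hi
      by_contra hlt
      obtain ⟨m', hm', rfl⟩ := hsurj i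
      by_cases h : m' = m
      · subst h
        have := hle m' hm' (f m')
        omega
      · have := hf m hm m' hm' h
        have := hval m hm
        omega
    have hu : (D.sup id) - 1 + 1 = D.sup id := by
      ext j
      have := hpos j
      simp only [Pi.add_apply, Pi.sub_apply, Pi.one_apply]
      omega
    refine ⟨D.sup id - 1, ⟨fun g hg h => ?_, fun i => ?_⟩, hu⟩
    · apply hstr g hg
      rw [← hu]
      exact (strong_iff g _).2 h
    · obtain ⟨m, hm, rfl⟩ := hsurj i
      refine ⟨m, hDG hm, fun j => ?_⟩
      simp only [Pi.add_apply, Pi.sub_apply, Pi.one_apply]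
      by_cases h : j = f m
      · subst h
        have := hle m hm (f m)
        simp only [Pi.single_eq_same]
        omega
      · obtain ⟨m', hm', rfl⟩ := hsurj j
        have hne : m ≠ m' := fun e => h (by rw [e])
        have h1 := hf m' hm' m hm hne
        have h2 := hval m' hm'
        omega
  · rintro ⟨u, ⟨hu1, hu2⟩, rfl⟩
    choose m hmG hm using hu2
    have hmi : ∀ i, m i i = u i + 1 := by
      intro i
      have h1 := hm i i
      simp only [Pi.add_apply, Pi.single_eq_same] at h1
      by_contra hne
      apply hu1 (m i) (hmG i)
      intro j
      by_cases h : j = i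
      · subst h
        change m j j ≤ u j
        omega
      · have := hm i j
        simpa [Pi.single_apply, h] using this
    have hmj : ∀ i j, j ≠ i → m i j ≤ u j := by
      intro i j h
      have := hm i j
      simpa [Pi.single_apply, h] using this
    have minj : Function.Injective m := by
      intro i j h
      by_contra hne
      have h1 := hmi i
      rw [h] at h1
      have := hmj j i hne
      omega
    have hs : (Finset.univ.image m).sup id = u + 1 := by
      ext j
      rw [Finset.sup_apply, Finset.sup_image]
      apply le_antisymm
      · refine Finset.sup_le fun i _ => ?_
        change m i j ≤ u j + 1
        by_cases h : j = i
        · subst h; exact (hmi j).le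
        · have := hmj i j h
          omega
      · rw [Pi.add_apply, Pi.one_apply, ← hmi j]
        exact Finset.le_sup (f := fun i => m i j) (Finset.mem_univ j)
    refine ⟨Finset.univ.image m, ⟨?_, ?_, ?_, ?_⟩, hs⟩
    · intro x hx
      obtain ⟨i, -, rfl⟩ := Finset.mem_image.1 hx
      exact hmG i
    · intro x hx
      obtain ⟨i, -, rfl⟩ := Finset.mem_image.1 hx
      refine ⟨i, fun y hy hne => ?_⟩
      obtain ⟨j, -, rfl⟩ := Finset.mem_image.1 hy
      have h1 := hmi i
      have h2 := hmj j i (fun e => hne (by rw [e]))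
      omega
    · rw [Finset.card_image_of_injective _ minj]; simp
    · intro g hg h
      rw [hs] at h
      exact hu1 g hg ((strong_iff g u).1 h)

end
end Kosz

open Classical in
/-- `β_n(S/M)` equals the number of distinct monomials `lcm(D)`, where `D` ranges over the
dominant subsets of the minimal generating set `G` of cardinality `n` whose lcm is not
strongly divided by any element of `G`. -/
theorem bettiN_eq_card_lcms (n : ℕ) (k : Type) [Field k]
    (G : Finset (Fin n → ℕ)) (M : Ideal (MvPolynomial (Fin n) k))
    (hgen : M = monIdeal k ↑G)
    (hmin : ∀ a ∈ G, ∀ b ∈ G, a ≠ b → ¬a ≤ b) :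
    betti k M n =
      ((G.powerset.filter fun D => DominantSet D ∧ D.card = n ∧
          ∀ g ∈ G, ¬StronglyDivides g (D.sup id)).image fun D => D.sup id).card := by
  subst hgen
  have hL := Kosz.L_eq G
  have hinj : Function.Injective (fun u : Fin n → ℕ => u + 1) := fun a b h => add_right_cancel h
  have hfin : (Kosz.U G).Finite := by
    apply Set.Finite.of_finite_image _ hinj.injOn
    rw [← hL]
    exact Finset.finite_toSet _
  rw [Kosz.betti_eq G hfin, ← Set.ncard_image_of_injective _ hinj, ← hL, Set.ncard_coe_finset]
end

section
/- Let G be a finite set of monomials in the variables x_1,…,x_n such that no element of G divides another. Suppose G contains a dominant subset D of cardinality n such that no element of G strongly divides lcm(D). Fix a nonempty subset Q ⊆ {1,…,n}, and let 𝒜 be the family of all subsets A of G such that: (i) for every j ∈ Q, the exponent of x_j in lcm(A) equals the exponent of x_j in lcm(D); and (ii) for every j ∉ Q, the exponent of x_j in lcm(A) is strictly smaller than the exponent of x_j in lcm(D). Then the cardinality of 𝒜 is odd. -/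
open Classical in
theorem odd_aux (n : ℕ) (G : Finset (Fin n → ℕ)) (m : Fin n → ℕ) (hm : ∀ j, 0 < m j)
    (h0 : ∀ g ∈ G, ∃ j, m j ≤ g j)
    (hd : ∀ j, ∃ d ∈ G, d ≤ m ∧ ∀ i, i ≠ j → d i < m i) (Q : Finset (Fin n)) :
    Odd (G.powerset.filter fun A =>
        (∀ j, j ∈ Q → A.sup id j = m j) ∧
        (∀ j, j ∉ Q → A.sup id j < m j)).card := by
  induction Q using Finset.strongInduction with
  | H Q ih =>
  have hlt : ∀ (A : Finset (Fin n → ℕ)) (j : Fin n),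
      A.sup id j < m j ↔ ∀ a ∈ A, a j < m j := by
    intro A j
    rw [Finset.sup_apply, Finset.sup_lt_iff (by simpa using hm j)]
    simp
  have hle : ∀ (A : Finset (Fin n → ℕ)) (j : Fin n),
      A.sup id j ≤ m j ↔ ∀ a ∈ A, a j ≤ m j := by
    intro A j
    rw [Finset.sup_apply, Finset.sup_le_iff]
    simp
  set GQ := G.filter (fun g => g ≤ m ∧ ∀ j, j ∉ Q → g j < m j) with hGQ
  have hsub : ∀ A, A ⊆ GQ ↔ A ⊆ G ∧ (∀ j, A.sup id j ≤ m j) ∧ ∀ j, j ∉ Q → A.sup id j < m j := by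
    intro A
    simp only [hlt, hle, hGQ, Finset.subset_iff, Finset.mem_filter, Pi.le_def]
    grind
  have key := Finset.card_eq_sum_card_fiberwise (s := GQ.powerset) (t := Q.powerset)
    (f := fun A => Finset.univ.filter (fun j => A.sup id j = m j)) (by
      intro A hA
      have hA' := (hsub A).1 (by simpa using hA)
      simp only [Finset.coe_powerset, Set.mem_preimage, Set.mem_powerset_iff, Finset.coe_subset]
      intro j hj
      by_contra hjQ
      have h1 := hA'.2.2 j hjQ
      have h2 := (Finset.mem_filter.1 hj).2
      omega)
  have fib : ∀ T ∈ Q.powerset, (GQ.powerset.filter (fun A =>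
      Finset.univ.filter (fun j => A.sup id j = m j) = T)).card =
      (G.powerset.filter fun A =>
        (∀ j, j ∈ T → A.sup id j = m j) ∧
        (∀ j, j ∉ T → A.sup id j < m j)).card := by
    intro T hT
    rw [Finset.mem_powerset] at hT
    congr 1
    ext A
    simp only [Finset.mem_filter, Finset.mem_powerset, hsub]
    constructor
    · rintro ⟨⟨hG, h1, h2⟩, rfl⟩
      refine ⟨hG, fun j hj => (Finset.mem_filter.1 hj).2, fun j hj => lt_of_le_of_ne (h1 j) ?_⟩
      intro h
      exact hj (Finset.mem_filter.2 ⟨Finset.mem_univ j, h⟩)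
    · rintro ⟨hG, h1, h2⟩
      refine ⟨⟨hG, fun j => ?_, fun j hj => h2 j (fun h => hj (hT h))⟩, ?_⟩
      · by_cases hj : j ∈ T
        · exact (h1 j hj).le
        · exact (h2 j hj).le
      · ext j
        simp only [Finset.mem_filter, Finset.mem_univ, true_and]
        refine ⟨fun h => ?_, h1 j⟩
        by_contra hj
        exact (h2 j hj).ne h
  rw [Finset.sum_congr rfl fib, Finset.card_powerset] at key
  rw [← ZMod.natCast_eq_one_iff_odd]
  have key2 := congrArg (Nat.cast : ℕ → ZMod 2) key
  rw [Nat.cast_sum, ← Finset.insert_erase (Finset.mem_powerset_self Q),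
    Finset.sum_insert (Finset.notMem_erase _ _)] at key2
  rw [Finset.sum_congr rfl (g := fun _ => (1 : ZMod 2)) (fun T hT => by
    rw [ZMod.natCast_eq_one_iff_odd]
    rw [Finset.mem_erase, Finset.mem_powerset] at hT
    exact ih T (Finset.ssubset_iff_subset_ne.2 ⟨hT.2, hT.1⟩))] at key2
  rw [Finset.sum_const, Finset.card_erase_of_mem (Finset.mem_powerset_self Q),
    Finset.card_powerset, nsmul_one, Nat.cast_sub Nat.one_le_two_pow] at key2
  have h2 : (2 : ZMod 2) = 0 := rfl
  push_cast at key2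
  rw [h2] at key2
  rcases Q.eq_empty_or_nonempty with hQ | hQ
  · have : GQ = ∅ := by
      rw [Finset.eq_empty_iff_forall_notMem]
      intro g hg
      obtain ⟨hg, -, h⟩ := Finset.mem_filter.1 hg
      obtain ⟨j, hj⟩ := h0 g hg
      have := h j (by simp [hQ])
      omega
    rw [this] at key2
    have hc : Q.card = 0 := by simp [hQ]
    rw [hc] at key2
    simp only [Finset.card_empty, pow_zero, sub_self, add_zero] at key2
    exact key2.symm
  · obtain ⟨j, hj⟩ := hQ
    obtain ⟨d, hdG, hdm, hdi⟩ := hd j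
    have hc : GQ.card ≠ 0 := by
      refine Finset.card_ne_zero_of_mem (a := d) (Finset.mem_filter.2 ⟨hdG, hdm, ?_⟩)
      rintro i hi
      exact hdi i (by rintro rfl; exact hi hj)
    have hc' : Q.card ≠ 0 := Finset.card_ne_zero_of_mem hj
    rw [zero_pow hc, zero_pow hc'] at key2
    linear_combination -key2

open Classical in
/-- Lemma 6.7: if the antichain `G` contains a dominant subset `D` with `#D = n` whose lcm is
not strongly divided by any element of `G`, then for every nonempty `Q ⊆ {1,…,n}`, the number of
subsets `A ⊆ G` with `lcm(A)` agreeing with `lcm(D)` exactly in the variables indexed by `Q`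
(and strictly smaller elsewhere) is odd. -/
theorem card_agreeing_subsets_odd (n : ℕ) (G : Finset (Fin n → ℕ))
    (hmin : ∀ a ∈ G, ∀ b ∈ G, a ≠ b → ¬a ≤ b)
    (D : Finset (Fin n → ℕ)) (hDG : D ⊆ G) (hdom : DominantSet D) (hcard : D.card = n)
    (hstr : ∀ g ∈ G, ¬StronglyDivides g (D.sup id))
    (Q : Finset (Fin n)) (hQ : Q.Nonempty) :
    Odd (G.powerset.filter fun A =>
        (∀ j, j ∈ Q → A.sup id j = D.sup id j) ∧
        (∀ j, j ∉ Q → A.sup id j < D.sup id j)).card := by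
  have hex : ∀ j, ∃ d ∈ D, ∀ m' ∈ D, m' ≠ d → m' j < d j := by
    haveI : Nonempty (Fin n) := ⟨hQ.choose⟩
    choose! f hf using hdom
    have hinj : Set.InjOn f D := by
      intro a ha b hb hab
      by_contra hne
      have h1 := hf a ha b hb (Ne.symm hne)
      have h2 := hf b hb a ha hne
      rw [hab] at h1
      omega
    have himg : D.image f = Finset.univ := by
      apply Finset.eq_univ_of_card
      rw [Finset.card_image_of_injOn hinj, hcard, Fintype.card_fin]
    intro j
    have hj : j ∈ D.image f := by rw [himg]; exact Finset.mem_univ j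
    obtain ⟨d, hd, rfl⟩ := Finset.mem_image.1 hj
    exact ⟨d, hd, hf d hd⟩
  choose d hdD hdlt using hex
  have hle : ∀ a ∈ D, a ≤ D.sup id := fun a ha => Finset.le_sup (f := id) ha
  have hlt : ∀ j, ∀ a ∈ D, a ≠ d j → a j < D.sup id j := fun j a ha hne =>
    lt_of_lt_of_le (hdlt j a ha hne) (hle _ (hdD j) j)
  have hinj : Function.Injective d := by
    have himg : Finset.univ.image d = D := by
      apply Finset.Subset.antisymm
      · intro a ha
        obtain ⟨j, -, rfl⟩ := Finset.mem_image.1 ha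
        exact hdD j
      · intro a ha
        obtain ⟨j, hj⟩ := hdom a ha
        refine Finset.mem_image.2 ⟨j, Finset.mem_univ j, ?_⟩
        by_contra hne
        have h1 := hj _ (hdD j) hne
        have h2 := hdlt j a ha (Ne.symm hne)
        omega
    rw [← Set.injOn_univ, ← Finset.coe_univ, ← Finset.card_image_iff, himg, hcard,
      Finset.card_univ, Fintype.card_fin]
  refine odd_aux n G (D.sup id) ?_ ?_ ?_ Q
  · intro j
    by_contra h
    apply hstr (d j) (hDG (hdD j))
    intro i hi
    by_cases hij : i = j
    · subst hij
      have : d i i ≤ D.sup id i := hle _ (hdD i) i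
      omega
    · have : d i j < D.sup id j := hlt j (d i) (hdD i) (fun h => hij (hinj h))
      omega
  · intro g hg
    by_contra! h
    exact hstr g hg (fun i _ => h i)
  · intro j
    exact ⟨d j, hDG (hdD j), hle _ (hdD j), fun i hij =>
      hlt i _ (hdD j) (fun h => hij (hinj h).symm)⟩
end

section
/- Let G be a finite set of monomials in the variables x_1,…,x_n such that no element of G divides another, and suppose G contains a dominant subset D of cardinality n such that no element of G strongly divides lcm(D). Then for every subset Q ⊆ {1,…,n} there exists a subset A ⊆ G such that the exponent of x_j in lcm(A) equals the exponent of x_j in lcm(D) for j ∈ Q and is strictly smaller for j ∉ Q; consequently, the set {lcm(A) : A ⊆ G} contains at least 2^n distinct monomials. -/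
open Classical in
/-- If the antichain `G` contains a dominant subset `D` with `#D = n` whose lcm is not strongly
divided by any element of `G`, then for every `Q ⊆ {1,…,n}` there is a subset `A ⊆ G` whose lcm
agrees with `lcm(D)` exactly in the variables indexed by `Q` and is strictly smaller elsewhere;
consequently there are at least `2^n` distinct monomials of the form `lcm(A)`, `A ⊆ G`. -/
theorem exists_agreeing_subset_and_two_pow_le_card_lcms (n : ℕ) (G : Finset (Fin n → ℕ))
    (hmin : ∀ a ∈ G, ∀ b ∈ G, a ≠ b → ¬a ≤ b)
    (D : Finset (Fin n → ℕ)) (hDG : D ⊆ G) (hdom : DominantSet D) (hcard : D.card = n)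
    (hstr : ∀ g ∈ G, ¬StronglyDivides g (D.sup id)) :
    (∀ Q : Finset (Fin n), ∃ A ⊆ G,
        (∀ j, j ∈ Q → A.sup id j = D.sup id j) ∧
        (∀ j, j ∉ Q → A.sup id j < D.sup id j)) ∧
    2 ^ n ≤ (G.powerset.image fun A => A.sup id).card := by
  have happ : ∀ (A : Finset (Fin n → ℕ)) (j : Fin n), A.sup id j = A.sup (fun m => m j) := by
    intro A j
    rw [Finset.sup_apply]
    rfl
  have key : ∀ Q : Finset (Fin n), ∃ A ⊆ G,
        (∀ j, j ∈ Q → A.sup id j = D.sup id j) ∧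
        (∀ j, j ∉ Q → A.sup id j < D.sup id j) := by
    choose f hf using hdom
    -- the map from `D` to variables is a bijection
    let F : D → Fin n := fun m => f m.1 m.2
    have hinj : Function.Injective F := by
      intro a b hab
      by_contra hne
      have hne' : a.1 ≠ b.1 := fun h => hne (Subtype.ext h)
      have h1 := hf a.1 a.2 b.1 b.2 hne'.symm
      have h2 := hf b.1 b.2 a.1 a.2 hne'
      have hab' : f a.1 a.2 = f b.1 b.2 := hab
      rw [hab'] at h1
      omega
    have hbij : Function.Bijective F := by
      rw [Fintype.bijective_iff_injective_and_card]
      exact ⟨hinj, by simp [hcard]⟩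
    have hF : ∀ j, ∃ m, ∃ hm : m ∈ D, f m hm = j := by
      intro j
      obtain ⟨m, hm⟩ := hbij.2 j
      exact ⟨m.1, m.2, hm⟩
    choose g hgD hgf using hF
    have hgdom : ∀ j, ∀ m' ∈ D, m' ≠ g j → m' j < g j j := by
      intro j
      have := hf (g j) (hgD j)
      rwa [hgf] at this
    have hginj : ∀ i j, g i = g j → i = j := by
      intro i j h
      rw [← hgf i, ← hgf j]
      congr 1
    have hle : ∀ j, g j j ≤ D.sup id j := fun j =>
      (Finset.le_sup (f := id) (hgD j) : g j ≤ D.sup id) j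
    have hpos : ∀ j, 0 < D.sup id j := by
      intro j
      by_contra h0
      have hz : D.sup id j = 0 := by omega
      have hz' : g j j = 0 := by have := hle j; omega
      refine hstr (g j) (hDG (hgD j)) ?_
      intro i hi
      by_cases hij : i = j
      · subst hij; exact absurd hz' hi
      · have := hgdom j (g i) (hgD i) (fun h => hij (hginj i j h))
        omega
    intro Q
    have hsub : Q.image g ⊆ D := by
      intro m hm
      obtain ⟨i, _, rfl⟩ := Finset.mem_image.1 hm
      exact hgD i
    refine ⟨Q.image g, hsub.trans hDG, ?_, ?_⟩
    · intro j hj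
      apply le_antisymm
      · exact (Finset.sup_mono hsub : (Q.image g).sup id ≤ D.sup id) j
      · rw [happ D j]
        apply Finset.sup_le
        intro m hm
        have h1 : g j j ≤ (Q.image g).sup id j :=
          (Finset.le_sup (f := id) (Finset.mem_image_of_mem g hj) :
            g j ≤ (Q.image g).sup id) j
        by_cases h : m = g j
        · rw [h]; exact h1
        · exact (hgdom j m hm h).le.trans h1
    · intro j hj
      rw [happ (Q.image g) j]
      rw [Finset.sup_lt_iff (by simpa using hpos j)]
      intro m hm
      obtain ⟨i, hi, rfl⟩ := Finset.mem_image.1 hm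
      refine lt_of_lt_of_le (hgdom j (g i) (hgD i) ?_) (hle j)
      intro h
      exact hj (hginj i j h ▸ hi)
  refine ⟨key, ?_⟩
  choose A hAG hA1 hA2 using key
  have h : (Finset.univ : Finset (Finset (Fin n))).card ≤
      (G.powerset.image fun A => A.sup id).card := by
    apply Finset.card_le_card_of_injOn (fun Q => (A Q).sup id)
    · intro Q _
      exact Finset.mem_coe.2 (Finset.mem_image.2 ⟨A Q, Finset.mem_powerset.2 (hAG Q), rfl⟩)
    · intro P _ Q _ hPQ
      have hPQ' : (A P).sup id = (A Q).sup id := hPQ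
      ext j
      constructor
      · intro hj
        by_contra hj'
        have h1 := hA1 P j hj
        have h2 := hA2 Q j hj'
        rw [hPQ'] at h1
        omega
      · intro hj
        by_contra hj'
        have h1 := hA1 Q j hj
        have h2 := hA2 P j hj'
        rw [hPQ'] at h2
        omega
  simpa using h
end

section
/- Let m_1,…,m_q be monomials in x_1,…,x_n with exponent vectors (α_{i1},…,α_{in}), let m = lcm(m_1,…,m_q) with exponent vector (α_1,…,α_n) where α_j = max_i α_{ij}, and define the twin monomials m'_1,…,m'_q by giving m'_i the exponent vector (β_{i1},…,β_{in}) with β_{ij} = α_j if α_{ij} = α_j and β_{ij} = 0 otherwise. Then for every subset T ⊆ {1,…,q}: lcm{m_i : i ∈ T} = m if and only if lcm{m'_i : i ∈ T} = m. In particular, for each s, the number of s-element subsets T with lcm{m_i : i ∈ T} = m equals the number of s-element subsets T with lcm{m'_i : i ∈ T} = m. -/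
theorem sup_eq_iff_aux {q : ℕ} (T : Finset (Fin q)) (f : Fin q → ℕ) (a : ℕ)
    (h : ∀ i, f i ≤ a) : T.sup f = a ↔ a = 0 ∨ ∃ i ∈ T, f i = a := by
  constructor
  · intro e
    rcases T.eq_empty_or_nonempty with rfl | hT
    · left; simpa using e.symm
    · obtain ⟨i, hi, hs⟩ := Finset.exists_mem_eq_sup T hT f
      exact Or.inr ⟨i, hi, hs.symm.trans e⟩
  · intro e
    apply le_antisymm (Finset.sup_le fun i _ => h i)
    rcases e with rfl | ⟨i, hi, rfl⟩
    · exact Nat.zero_le _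
    · exact Finset.le_sup (f := f) hi

/-- Let `m = lcm(m_1,…,m_q)` and let `m'_1,…,m'_q` be the twin monomials: the exponent of `x_j`
in `m'_i` is that of `m` if the exponents of `x_j` in `m_i` and in `m` agree, and `0` otherwise.
Then for every `T ⊆ {1,…,q}`, `lcm{m_i : i ∈ T} = m` iff `lcm{m'_i : i ∈ T} = m`; in
particular, for each `s` the number of `s`-element subsets `T` with `lcm{m_i : i ∈ T} = m`
equals the number of `s`-element subsets `T` with `lcm{m'_i : i ∈ T} = m`. -/
theorem twin_lcm_iff_and_card_eq (n q : ℕ) (m : Fin q → (Fin n → ℕ))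
    (mm : Fin n → ℕ) (hmm : mm = Finset.univ.sup m)
    (m' : Fin q → (Fin n → ℕ))
    (hm' : ∀ i j, m' i j = if m i j = mm j then mm j else 0) :
    (∀ T : Finset (Fin q), T.sup m = mm ↔ T.sup m' = mm) ∧
    ∀ s : ℕ,
      ((Finset.univ : Finset (Fin q)).powerset.filter
          fun T => T.card = s ∧ T.sup m = mm).card =
      ((Finset.univ : Finset (Fin q)).powerset.filter
          fun T => T.card = s ∧ T.sup m' = mm).card := by
  have hle : ∀ i j, m i j ≤ mm j := fun i j => by
    rw [hmm]; exact Finset.le_sup (f := m) (Finset.mem_univ i) j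
  have hle' : ∀ i j, m' i j ≤ mm j := fun i j => by
    rw [hm']; split_ifs <;> simp
  have key : ∀ T : Finset (Fin q), T.sup m = mm ↔ T.sup m' = mm := by
    intro T
    rw [funext_iff, funext_iff]
    refine forall_congr' fun j => ?_
    rw [Finset.sup_apply, Finset.sup_apply, sup_eq_iff_aux T _ _ fun i => hle i j,
      sup_eq_iff_aux T _ _ fun i => hle' i j]
    by_cases h0 : mm j = 0
    · simp [h0]
    · have : ∀ i, m' i j = mm j ↔ m i j = mm j := fun i => by
        rw [hm']; split_ifs with h <;> simp [h, Ne.symm h0]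
      simp only [this]
  exact ⟨key, fun s => by simp only [key]⟩
end

section
/- Let S = k[x_1,…,x_n] be a polynomial ring over a field k and let M be a nonzero proper monomial ideal of S. If β_k(S/M) = 1 for some k with 1 ≤ k ≤ n, then pd(S/M) = k. -/
open CategoryTheory MvPolynomial

namespace BettiOne
open Limits MonoidalCategory

variable {R : Type} [CommRing R]

/-- The complex `X ⊗ P`. -/
noncomputable abbrev tc (X : ModuleCat R) (P : ChainComplex (ModuleCat R) ℕ) :
    ChainComplex (ModuleCat R) ℕ :=
  (((tensoringLeft (ModuleCat R)).obj X).mapHomologicalComplex _).obj P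

noncomputable abbrev tcMap {X X' : ModuleCat R} (f : X ⟶ X') (P : ChainComplex (ModuleCat R) ℕ) :
    tc X P ⟶ tc X' P :=
  (NatTrans.mapHomologicalComplex ((tensoringLeft (ModuleCat R)).map f) _).app P

lemma tc_isZero_flat (X : ModuleCat R) [Module.Flat R X] {Y : ModuleCat R}
    (P : ProjectiveResolution Y) (i : ℕ) : IsZero ((tc X P.complex).homology (i+1)) := by
  refine (HomologicalComplex.exactAt_iff_isZero_homology (tc X P.complex) (i+1)).1 ?_
  refine (HomologicalComplex.exactAt_iff' (tc X P.complex) (i+2) (i+1) i (by simp) (by simp)).2 ?_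
  have h := P.exact_succ i
  rw [ShortComplex.ShortExact.moduleCat_exact_iff_function_exact] at h ⊢
  exact Module.Flat.lTensor_exact X h

/-- short complex of tensored complexes -/
noncomputable abbrev tcS (S : ShortComplex (ModuleCat R)) (P : ChainComplex (ModuleCat R) ℕ) :
    ShortComplex (ChainComplex (ModuleCat R) ℕ) :=
  ShortComplex.mk (tcMap S.f P) (tcMap S.g P) (by
    ext i : 1
    simp only [HomologicalComplex.comp_f, NatTrans.mapHomologicalComplex_app_f,
      HomologicalComplex.zero_f]
    change S.f ▷ P.X i ≫ S.g ▷ P.X i = 0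
    rw [← comp_whiskerRight, S.zero]
    simp)

lemma tcS_shortExact (S : ShortComplex (ModuleCat R)) (hS : S.ShortExact)
    {Y : ModuleCat R} (P : ProjectiveResolution Y) : (tcS S P.complex).ShortExact := by
  apply HomologicalComplex.shortExact_of_degreewise_shortExact
  intro i
  have hproj : Module.Projective R (P.complex.X i) := by
    have := P.projective i
    exact (IsProjective.iff_projective (R := R) (P.complex.X i)).2 this
  have : Module.Flat R (P.complex.X i) := inferInstance
  exact hS.map_of_exact (tensorRight (P.complex.X i))

noncomputable def torIso (X Y : ModuleCat R) (P : ProjectiveResolution Y) (i : ℕ) :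
    ((Tor (ModuleCat R) i).obj X).obj Y ≅ (tc X P.complex).homology i :=
  P.isoLeftDerivedObj ((tensoringLeft (ModuleCat R)).obj X) i

noncomputable def torShift (S : ShortComplex (ModuleCat R)) (hS : S.ShortExact)
    [Module.Flat R S.X₂] (Y : ModuleCat R) (i : ℕ) :
    ((Tor (ModuleCat R) (i+2)).obj S.X₃).obj Y ≅ ((Tor (ModuleCat R) (i+1)).obj S.X₁).obj Y :=
  torIso _ _ (projectiveResolution Y) _ ≪≫
    (tcS_shortExact S hS (projectiveResolution Y)).δIso (i+2) (i+1) (by simp)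
      (tc_isZero_flat _ _ _) (tc_isZero_flat _ _ _) ≪≫ (torIso _ _ (projectiveResolution Y) _).symm

lemma tor_flat (X Y : ModuleCat R) [Module.Flat R X] (i : ℕ) :
    IsZero (((Tor (ModuleCat R) (i+1)).obj X).obj Y) :=
  (tc_isZero_flat X (projectiveResolution Y) i).of_iso (torIso _ _ _ _)

noncomputable def tc0Iso (X Y : ModuleCat R) (P : ProjectiveResolution Y) :
   (tc X P.complex).homology 0 ≅ X ⊗ Y :=
  (torIso X Y P 0).symm ≪≫ (((tensoringLeft (ModuleCat R)).obj X).leftDerivedZeroIsoSelf).app Y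

lemma tor_one_zero (S : ShortComplex (ModuleCat R)) (hS : S.ShortExact)
    [Module.Flat R S.X₂] (Y : ModuleCat R) (h : IsZero S.X₁) :
    IsZero (((Tor (ModuleCat R) 1).obj S.X₃).obj Y) := by
  let P := projectiveResolution Y
  have := (tcS_shortExact S hS P).mono_δ 1 0 rfl (tc_isZero_flat _ _ _)
  have h0 : IsZero ((tc S.X₁ P.complex).homology 0) := by
    refine IsZero.of_iso ?_ (tc0Iso S.X₁ Y P)
    exact (tensorRight Y).map_isZero h
  exact (IsZero.of_mono ((tcS_shortExact S hS P).δ 1 0 rfl) h0).of_iso (torIso _ _ P 1)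

lemma homologyMap_zero {X X' Y : ModuleCat R} (f : X ⟶ X') (P : ProjectiveResolution Y)
    (h : f ▷ Y = 0) : HomologicalComplex.homologyMap (tcMap f P.complex) 0 = 0 := by
  have h1 : HomologicalComplex.opcyclesMap (tcMap f P.complex) 0 ≫
      P.fromLeftDerivedZero' ((tensoringLeft (ModuleCat R)).obj X') =
      P.fromLeftDerivedZero' ((tensoringLeft (ModuleCat R)).obj X) ≫ f ▷ Y := by
    rw [← cancel_epi (HomologicalComplex.pOpcycles _ _)]
    rw [HomologicalComplex.p_opcyclesMap_assoc,
      ProjectiveResolution.pOpcycles_comp_fromLeftDerivedZero',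
      ProjectiveResolution.pOpcycles_comp_fromLeftDerivedZero'_assoc]
    exact (whisker_exchange f (P.π.f 0)).symm
  rw [h, comp_zero] at h1
  have : PreservesFiniteColimits ((tensoringLeft (ModuleCat R)).obj X') :=
    inferInstanceAs (PreservesFiniteColimits (tensorLeft X'))
  have h2 : HomologicalComplex.opcyclesMap (tcMap f P.complex) 0 = 0 := by
    rwa [← cancel_mono (P.fromLeftDerivedZero' ((tensoringLeft (ModuleCat R)).obj X')), zero_comp]
  rw [← cancel_mono (ChainComplex.isoHomologyι₀ _).hom]
  have h3 := HomologicalComplex.homologyι_naturality (tcMap f P.complex) 0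
  rw [h2, comp_zero] at h3
  rw [zero_comp]
  exact h3

noncomputable def torOne (S : ShortComplex (ModuleCat R)) (hS : S.ShortExact)
    [Module.Flat R S.X₂] (Y : ModuleCat R) (h : S.f ▷ Y = 0) :
    ((Tor (ModuleCat R) 1).obj S.X₃).obj Y ≅ S.X₁ ⊗ Y :=
  haveI := (tcS_shortExact S hS (projectiveResolution Y)).mono_δ 1 0 rfl
    (tc_isZero_flat _ _ _)
  haveI : Epi ((tcS_shortExact S hS (projectiveResolution Y)).δ 1 0 rfl) :=
    ((tcS_shortExact S hS (projectiveResolution Y)).homology_exact₁ 1 0 rfl).epi_f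
      (homologyMap_zero S.f (projectiveResolution Y) h)
  haveI := isIso_of_mono_of_epi ((tcS_shortExact S hS (projectiveResolution Y)).δ 1 0 rfl)
  torIso _ _ (projectiveResolution Y) _ ≪≫
    asIso ((tcS_shortExact S hS (projectiveResolution Y)).δ 1 0 rfl) ≪≫ tc0Iso _ _ _


/-! ### projective resolutions -/

lemma mkShortExact {A B C : Type} [AddCommGroup A] [AddCommGroup B] [AddCommGroup C]
    [Module R A] [Module R B] [Module R C] (f : A →ₗ[R] B) (g : B →ₗ[R] C)
    (hf : Function.Injective f) (hg : Function.Surjective g) (h : Function.Exact f g) :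
    (ShortComplex.mk (ModuleCat.ofHom f) (ModuleCat.ofHom g)
      (by ext x; exact h.apply_apply_eq_zero x)).ShortExact where
  exact := (ShortComplex.ShortExact.moduleCat_exact_iff_function_exact _).2 h
  mono_f := (ModuleCat.mono_iff_injective _).2 hf
  epi_g := (ModuleCat.epi_iff_surjective _).2 hg

/-- cokernel of the differential -/
abbrev opc (K : ChainComplex (ModuleCat R) ℕ) (i : ℕ) : Type :=
  (K.X i) ⧸ LinearMap.range (K.d (i+1) i).hom

lemma tor_opc_zero (K : ChainComplex (ModuleCat R) ℕ) (hfl : ∀ i, Module.Flat R (K.X i))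
    (hex : ∀ i, Function.Exact (K.d (i+2) (i+1)).hom (K.d (i+1) i).hom) (Y : ModuleCat R)
    (a : ℕ) : ∀ i, IsZero (K.X (i+a+1)) →
      IsZero (((Tor (ModuleCat R) (a+1)).obj (ModuleCat.of R (opc K i))).obj Y) := by
  have hse : ∀ i, ∃ (f : opc K (i+1) →ₗ[R] K.X i), Function.Injective f ∧
      Function.Exact f (LinearMap.range (K.d (i+1) i).hom).mkQ := by
    intro i
    have hker := (LinearMap.exact_iff.1 (hex i))
    refine ⟨Submodule.liftQ _ (K.d (i+1) i).hom hker.ge, ?_, ?_⟩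
    · rw [← LinearMap.ker_eq_bot, Submodule.ker_liftQ_eq_bot]
      exact hker.le
    · rw [LinearMap.exact_iff, Submodule.ker_mkQ, Submodule.range_liftQ]
  induction a with
  | zero =>
    intro i hz
    obtain ⟨f, hf, hfg⟩ := hse i
    have hS := mkShortExact f _ hf (Submodule.mkQ_surjective _) hfg
    have := hfl i
    refine tor_one_zero _ hS Y ?_
    have : Subsingleton (K.X (i+1)) := ModuleCat.subsingleton_of_isZero hz
    exact ModuleCat.isZero_of_subsingleton _
  | succ a ih =>
    intro i hz
    obtain ⟨f, hf, hfg⟩ := hse i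
    have hS := mkShortExact f _ hf (Submodule.mkQ_surjective _) hfg
    have := hfl i
    refine (ih (i+1) ?_).of_iso (torShift _ hS Y a)
    rwa [show i + 1 + a + 1 = i + (a+1) + 1 by omega]

lemma flat_of_proj (N : ModuleCat R) [Projective N] : Module.Flat R N := by
  have hproj : Module.Projective R N := (IsProjective.iff_projective (R := R) N).2 inferInstance
  infer_instance

lemma tor_zero_of_resolution (N Y : ModuleCat R) (P : ProjectiveResolution N) (a : ℕ)
    (h : IsZero (P.complex.X (a+1))) : IsZero (((Tor (ModuleCat R) (a+1)).obj N).obj Y) := by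
  have h1 := tor_opc_zero P.complex (fun i => flat_of_proj _)
    (fun i => (ShortComplex.ShortExact.moduleCat_exact_iff_function_exact _).1 (P.exact_succ i)) Y
    a 0 (by simpa using h)
  refine h1.of_iso (((Tor (ModuleCat R) (a+1)).mapIso ?_).app Y)
  refine P.isColimitCokernelCofork.coconePointUniqueUpToIso (ModuleCat.cokernelIsColimit _)

/-- there is a projective resolution of length `≤ d` -/
def HasRes (N : ModuleCat R) (d : ℕ) : Prop :=
  ∃ P : ProjectiveResolution N, ∀ i : ℕ, d < i → IsZero (P.complex.X i)

lemma hasRes_zero (N : ModuleCat R) [Projective N] : HasRes N 0 :=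
  ⟨ProjectiveResolution.self N, fun i hi =>
    HomologicalComplex.isZero_single_obj_X _ _ _ _ (by omega)⟩

lemma HasRes.of_iso {N N' : ModuleCat R} (e : N ≅ N') {d : ℕ} (h : HasRes N d) : HasRes N' d := by
  obtain ⟨P, hP⟩ := h
  refine ⟨⟨P.complex, P.projective, P.π ≫ (ChainComplex.single₀ _).map e.hom, inferInstance⟩, hP⟩

lemma HasRes.splice (S : ShortComplex (ModuleCat R)) (hS : S.ShortExact) [Projective S.X₂] {d : ℕ}
    (h : HasRes S.X₁ d) : HasRes S.X₃ (d+1) := by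
  obtain ⟨P, hP⟩ := h
  obtain ⟨p, hp, hpex, hpepi⟩ : ∃ (p : P.complex.X 0 ⟶ S.X₁) (hp : P.complex.d 1 0 ≫ p = 0),
      (ShortComplex.mk _ _ hp).Exact ∧ Epi p :=
    ⟨P.π.f 0, P.complex_d_comp_π_f_zero,
      ShortComplex.exact_of_g_is_cokernel _ P.isColimitCokernelCofork,
      inferInstanceAs (Epi (P.π.f 0))⟩
  have w : P.complex.d 1 0 ≫ (p ≫ S.f) = 0 := by
    rw [← Category.assoc, hp, zero_comp]
  have w2 : (ChainComplex.augment P.complex (p ≫ S.f) w).d 1 0 ≫ S.g = 0 := by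
    change (p ≫ S.f) ≫ S.g = 0
    simp
  have := hS.mono_f
  have := hS.epi_g
  have hproj : ∀ i, Projective ((ChainComplex.augment P.complex (p ≫ S.f) w).X i) := by
    intro i
    cases i with
    | zero => exact inferInstanceAs (Projective S.X₂)
    | succ i => exact P.projective i
  have hex1 : (ShortComplex.mk (p ≫ S.f) S.g (by simp)).Exact := by
    have h1 := (ShortComplex.ShortExact.moduleCat_exact_iff_function_exact _).1 hS.exact
    have hsurj := (ModuleCat.epi_iff_surjective _).1 hpepi
    refine (ShortComplex.ShortExact.moduleCat_exact_iff_function_exact _).2 ?_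
    intro y
    refine (h1 y).trans ⟨?_, ?_⟩
    · rintro ⟨x, rfl⟩
      obtain ⟨z, rfl⟩ := hsurj x
      exact ⟨z, rfl⟩
    · rintro ⟨x, rfl⟩
      exact ⟨p.hom x, rfl⟩
  have hex2 : (ShortComplex.mk (P.complex.d 1 0) (p ≫ S.f) w).Exact := by
    have h1 := (ShortComplex.ShortExact.moduleCat_exact_iff_function_exact _).1 hpex
    have hinj := (ModuleCat.mono_iff_injective _).1 hS.mono_f
    refine (ShortComplex.ShortExact.moduleCat_exact_iff_function_exact _).2 ?_
    intro y
    refine Iff.trans ?_ (h1 y)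
    change S.f.hom (p.hom y) = 0 ↔ p.hom y = 0
    exact map_eq_zero_iff _ hinj
  refine ⟨⟨ChainComplex.augment P.complex (p ≫ S.f) w, hproj,
    (ChainComplex.toSingle₀Equiv _ _).symm ⟨S.g, w2⟩, ⟨fun n => ?_⟩⟩, ?_⟩
  · cases n with
    | zero =>
      rw [ChainComplex.quasiIsoAt₀_iff, ShortComplex.quasiIso_iff_of_zeros']
      · exact ⟨hex1, hS.epi_g⟩
      all_goals rfl
    | succ n =>
      rw [quasiIsoAt_iff_exactAt']
      · rw [HomologicalComplex.exactAt_iff' _ (n + 1 + 1) (n + 1) n (by simp) (by simp)]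
        cases n with
        | zero => exact hex2
        | succ n => exact P.exact_succ n
      · exact ChainComplex.exactAt_succ_single_obj _ _
  · intro i hi
    cases i with
    | zero => omega
    | succ i => exact hP i (by omega)


/-! ### graded minimal covers -/

section graded
variable {n : ℕ} {k : Type} [Field k]

/-- degree `t` component of a vector in the graded free module with shifts `d`. -/
noncomputable def hcomp {r : ℕ} (d : Fin r → ℕ) (t : ℕ) :
    (Fin r → MvPolynomial (Fin n) k) →ₗ[k] (Fin r → MvPolynomial (Fin n) k) :=
  LinearMap.pi fun i => if d i ≤ t then (homogeneousComponent (t - d i)) ∘ₗ LinearMap.proj i else 0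

lemma hcomp_apply {r : ℕ} (d : Fin r → ℕ) (t : ℕ) (x : Fin r → MvPolynomial (Fin n) k)
    (i : Fin r) : hcomp d t x i = if d i ≤ t then homogeneousComponent (t - d i) (x i) else 0 := by
  unfold hcomp
  rw [LinearMap.pi_apply]
  split_ifs <;> rfl

/-- homogeneous submodules -/
def Homog {r : ℕ} (d : Fin r → ℕ)
    (N : Submodule (MvPolynomial (Fin n) k) (Fin r → MvPolynomial (Fin n) k)) : Prop :=
  ∀ x ∈ N, ∀ t, hcomp d t x ∈ N

/-- contained in the maximal ideal times the free module -/
def InMax {r : ℕ}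
    (N : Submodule (MvPolynomial (Fin n) k) (Fin r → MvPolynomial (Fin n) k)) : Prop :=
  ∀ x ∈ N, ∀ i, coeff 0 (x i) = 0

lemma hcomp_hcomp {r : ℕ} (d : Fin r → ℕ) (t : ℕ) (x : Fin r → MvPolynomial (Fin n) k) :
    hcomp d t (hcomp d t x) = hcomp d t x := by
  ext1 i
  rw [hcomp_apply, hcomp_apply]
  split_ifs
  · exact homogeneousComponent_eq_self (homogeneousComponent_isHomogeneous _ _)
  · rfl

lemma sum_hcomp {r : ℕ} (d : Fin r → ℕ) (x : Fin r → MvPolynomial (Fin n) k) :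
    ∃ T, x = ∑ t ∈ Finset.range T, hcomp d t x := by
  refine ⟨(∑ i, ((x i).totalDegree + d i)) + 1, ?_⟩
  ext1 i
  rw [Finset.sum_apply]
  ext m
  rw [coeff_sum]
  by_cases hm : coeff m (x i) = 0
  · rw [hm, Finset.sum_eq_zero]
    intro t _
    rw [hcomp_apply]
    split_ifs
    · rw [coeff_homogeneousComponent, hm, ite_self]
    · simp
  · have hle : m.degree + d i < (∑ i, ((x i).totalDegree + d i)) + 1 := by
      have h1 : m.degree ≤ (x i).totalDegree := by
        have := le_totalDegree (mem_support_iff.2 hm)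
        rwa [Finsupp.sum_fintype _ _ (fun _ => rfl), ← Finsupp.degree_eq_sum] at this
      have h2 := Finset.single_le_sum (f := fun i => (x i).totalDegree + d i)
        (fun _ _ => Nat.zero_le _) (Finset.mem_univ i)
      omega
    rw [Finset.sum_eq_single (m.degree + d i)]
    · rw [hcomp_apply, if_pos (by omega), coeff_homogeneousComponent, if_pos (by omega)]
    · intro t _ ht
      rw [hcomp_apply]
      split_ifs
      · rw [coeff_homogeneousComponent, if_neg (by omega)]
      · simp
    · intro h
      exact absurd (Finset.mem_range.2 hle) h

lemma hc_mul {s : ℕ} (m : ℕ) (c g : MvPolynomial (Fin n) k) (hg : g.IsHomogeneous s) :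
    homogeneousComponent m (c * g) = if s ≤ m then homogeneousComponent (m - s) c * g else 0 := by
  let _ : GradedAlgebra (homogeneousSubmodule (Fin n) k) := MvPolynomial.gradedAlgebra
  have hd : ∀ (p : MvPolynomial (Fin n) k) (i : ℕ),
      (DirectSum.decompose (homogeneousSubmodule (Fin n) k) p i : MvPolynomial (Fin n) k) =
        homogeneousComponent i p := fun p i => decomposition.decompose'_apply p i
  have h := DirectSum.coe_decompose_mul_of_right_mem (homogeneousSubmodule (Fin n) k)
    (a := c) (i := s) m ((mem_homogeneousSubmodule _ _).2 hg)
  rw [hd, hd] at h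
  exact h

lemma hcomp_smul {r : ℕ} (d : Fin r → ℕ) (t e : ℕ) (c : MvPolynomial (Fin n) k)
    (g : Fin r → MvPolynomial (Fin n) k) (hg : hcomp d e g = g) :
    hcomp d t (c • g) = (if e ≤ t then homogeneousComponent (t - e) c else 0) • g := by
  ext1 i
  have hi := congrFun hg i
  rw [hcomp_apply] at hi ⊢
  rw [Pi.smul_apply, Pi.smul_apply, smul_eq_mul, smul_eq_mul]
  by_cases h1 : d i ≤ e
  · rw [if_pos h1] at hi
    have hh : (g i).IsHomogeneous (e - d i) := by
      rw [← hi]; exact homogeneousComponent_isHomogeneous _ _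
    rw [hc_mul _ _ _ hh]
    by_cases h2 : e ≤ t
    · rw [if_pos (by omega), if_pos (by omega), if_pos h2]
      congr 3
      omega
    · rw [if_neg h2, zero_mul]
      split_ifs
      · omega
      · rfl
      · rfl
  · rw [if_neg h1] at hi
    simp [← hi]

/-- `N` is generated by `q` homogeneous elements. -/
def HGen {r : ℕ} (d : Fin r → ℕ)
    (N : Submodule (MvPolynomial (Fin n) k) (Fin r → MvPolynomial (Fin n) k)) (q : ℕ) : Prop :=
  ∃ (g : Fin q → (Fin r → MvPolynomial (Fin n) k)) (e : Fin q → ℕ),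
    (∀ l, hcomp d (e l) (g l) = g l) ∧ Submodule.span _ (Set.range g) = N

lemma exists_hgen {r : ℕ} (d : Fin r → ℕ)
    (N : Submodule (MvPolynomial (Fin n) k) (Fin r → MvPolynomial (Fin n) k)) (hN : Homog d N) :
    ∃ q, HGen d N q := by
  set H : Set (Fin r → MvPolynomial (Fin n) k) := {y | y ∈ N ∧ ∃ t, hcomp d t y = y} with hH
  have hspan : Submodule.span (MvPolynomial (Fin n) k) H = N := by
    apply le_antisymm
    · rw [Submodule.span_le]
      exact fun y hy => hy.1
    · intro x hx
      obtain ⟨T, hT⟩ := sum_hcomp d x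
      rw [hT]
      exact Submodule.sum_mem _ fun t _ =>
        Submodule.subset_span ⟨hN x hx t, t, hcomp_hcomp d t x⟩
  have hfg : (Submodule.span (MvPolynomial (Fin n) k) H).FG := IsNoetherian.noetherian _
  obtain ⟨s, hs, hs'⟩ := (Submodule.fg_span_iff_fg_span_finset_subset _).1 hfg
  have hs2 : ∀ y : s, ∃ t, hcomp d t y.1 = y.1 := fun y => (hs y.2).2
  choose e he using hs2
  refine ⟨s.card, fun l => (s.equivFin.symm l).1, fun l => e (s.equivFin.symm l),
    fun l => he _, ?_⟩
  rw [← hspan, hs']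
  congr 1
  ext y
  constructor
  · rintro ⟨l, rfl⟩
    exact (s.equivFin.symm l).2
  · intro hy
    exact ⟨s.equivFin ⟨y, hy⟩, by simp⟩

lemma exists_cover {r : ℕ} (d : Fin r → ℕ)
    (N : Submodule (MvPolynomial (Fin n) k) (Fin r → MvPolynomial (Fin n) k)) (hN : Homog d N) :
    ∃ (q : ℕ) (e : Fin q → ℕ) (φ : (Fin q → MvPolynomial (Fin n) k) →ₗ[MvPolynomial (Fin n) k]
      (Fin r → MvPolynomial (Fin n) k)),
      LinearMap.range φ = N ∧ Homog e (LinearMap.ker φ) ∧ InMax (LinearMap.ker φ) := by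
  classical
  have hex := exists_hgen d N hN
  obtain ⟨g, e, hge, hgs⟩ := Nat.find_spec hex
  have hmin := fun {m : ℕ} => Nat.find_min hex (m := m)
  generalize Nat.find hex = q at g e hge hgs hmin
  have hhom : ∀ (c : Fin q → MvPolynomial (Fin n) k) (t : ℕ),
      Fintype.linearCombination _ g (hcomp e t c) =
        hcomp d t (Fintype.linearCombination (MvPolynomial (Fin n) k) g c) := by
    intro c t
    rw [Fintype.linearCombination_apply, Fintype.linearCombination_apply, map_sum]
    refine Finset.sum_congr rfl fun l _ => ?_
    rw [hcomp_smul d t (e l) _ _ (hge l), hcomp_apply]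
  have hker : Homog e (LinearMap.ker (Fintype.linearCombination (MvPolynomial (Fin n) k) g)) := by
    intro c hc t
    rw [LinearMap.mem_ker] at hc ⊢
    rw [hhom, hc, map_zero]
  refine ⟨q, e, Fintype.linearCombination _ g, ?_, hker, ?_⟩
  · rw [Fintype.range_linearCombination, hgs]
  · intro c hc l
    by_contra hne
    obtain ⟨m, rfl⟩ : ∃ m, q = m + 1 := ⟨q - 1, by have := l.2; omega⟩
    have hc' := hker c hc (e l)
    rw [LinearMap.mem_ker, Fintype.linearCombination_apply, Fin.sum_univ_succAbove _ l,
      hcomp_apply, if_pos le_rfl, Nat.sub_self, homogeneousComponent_zero] at hc'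
    refine hmin (m := m) (Nat.lt_succ_self m) ⟨fun i => g (l.succAbove i),
      fun i => e (l.succAbove i), fun i => hge _, ?_⟩
    set W := Submodule.span (MvPolynomial (Fin n) k) (Set.range fun i => g (l.succAbove i)) with hW
    have hmem : ∀ i, g (l.succAbove i) ∈ W := fun i => Submodule.subset_span ⟨i, rfl⟩
    have h1 : (C (coeff 0 (c l)) : MvPolynomial (Fin n) k) • g l ∈ W := by
      rw [eq_neg_of_add_eq_zero_left hc']
      exact W.neg_mem (Submodule.sum_mem _ fun i _ => W.smul_mem _ (hmem i))
    have h2 : g l ∈ W := by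
      have h3 := W.smul_mem (C (coeff 0 (c l))⁻¹ : MvPolynomial (Fin n) k) h1
      rwa [smul_smul, ← C_mul, inv_mul_cancel₀ hne, C_1, one_smul] at h3
    apply le_antisymm
    · rw [hW, Submodule.span_le, ← hgs]
      rintro _ ⟨i, rfl⟩
      exact Submodule.subset_span ⟨_, rfl⟩
    · rw [← hgs, Submodule.span_le]
      rintro _ ⟨i, rfl⟩
      rcases Fin.eq_self_or_eq_succAbove l i with rfl | ⟨i', rfl⟩
      · exact h2
      · exact hmem i'

end graded

/-! ### Betti numbers -/

section betti
variable {n : ℕ} {k : Type} [Field k]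

/-- the residue field -/
noncomputable abbrev resid (n : ℕ) (k : Type) [Field k] : ModuleCat (MvPolynomial (Fin n) k) :=
  ModuleCat.of _ (MvPolynomial (Fin n) k ⧸
    Ideal.span (Set.range (X : Fin n → MvPolynomial (Fin n) k)))

/-- dimension over the base field -/
noncomputable abbrev kdim (V : ModuleCat (MvPolynomial (Fin n) k)) : ℕ :=
  Module.finrank k
    ((ModuleCat.restrictScalars (algebraMap k (MvPolynomial (Fin n) k))).obj V)

lemma kdim_iso {V W : ModuleCat (MvPolynomial (Fin n) k)} (e : V ≅ W) : kdim V = kdim W :=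
  ((ModuleCat.restrictScalars
    (algebraMap k (MvPolynomial (Fin n) k))).mapIso e).toLinearEquiv.finrank_eq

lemma kdim_zero {V : ModuleCat (MvPolynomial (Fin n) k)} (h : IsZero V) : kdim V = 0 := by
  have := (ModuleCat.restrictScalars (algebraMap k (MvPolynomial (Fin n) k))).map_isZero h
  have := ModuleCat.subsingleton_of_isZero this
  exact Module.finrank_zero_of_subsingleton

lemma mem_max (p : MvPolynomial (Fin n) k) (hp : coeff 0 p = 0) :
    p ∈ Ideal.span (Set.range (X : Fin n → MvPolynomial (Fin n) k)) := by
  have h := (MvPolynomial.mem_ideal_span_X_image (x := p) (s := Set.univ)).2 (by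
    intro m hm
    have : m ≠ 0 := by
      rintro rfl
      exact mem_support_iff.1 hm hp
    obtain ⟨i, hi⟩ := Finsupp.ne_iff.1 this
    exact ⟨i, trivial, hi⟩)
  rwa [Set.image_univ] at h

lemma resid_surj : Function.Surjective (Algebra.linearMap k (resid n k)) := by
  intro y
  obtain ⟨p, rfl⟩ := Ideal.Quotient.mk_surjective y
  refine ⟨coeff 0 p, ?_⟩
  change Ideal.Quotient.mk _ (C (coeff 0 p)) = Ideal.Quotient.mk _ p
  rw [eq_comm, Ideal.Quotient.eq]
  exact mem_max _ (by simp)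

lemma kdim_pi (q : ℕ) (h : kdim (ModuleCat.of (MvPolynomial (Fin n) k) (Fin q → resid n k)) = 1) :
    q = 1 := by
  have hfin : Module.Finite k (resid n k) := Module.Finite.of_surjective _ resid_surj
  have e : ((ModuleCat.restrictScalars (algebraMap k (MvPolynomial (Fin n) k))).obj
      (ModuleCat.of (MvPolynomial (Fin n) k) (Fin q → resid n k))) ≃ₗ[k] (Fin q → resid n k) :=
    { toFun := fun x => x
      invFun := fun x => x
      map_add' := fun _ _ => rfl
      map_smul' := fun c x => by
        funext i
        exact algebraMap_smul (MvPolynomial (Fin n) k) c ((show Fin q → resid n k from x) i)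
      left_inv := fun _ => rfl
      right_inv := fun _ => rfl }
  have h1 : Module.finrank k (Fin q → resid n k) = 1 := e.finrank_eq.symm.trans h
  rw [Module.finrank_pi_fintype] at h1
  simp only [Finset.sum_const, Finset.card_univ, Fintype.card_fin, smul_eq_mul] at h1
  exact Nat.eq_one_of_mul_eq_one_right h1

lemma rTensor_zero {r : ℕ}
    (N : Submodule (MvPolynomial (Fin n) k) (Fin r → MvPolynomial (Fin n) k)) (hN : InMax N) :
    N.subtype.rTensor (resid n k) = 0 := by
  apply TensorProduct.ext'
  intro x y
  rw [LinearMap.rTensor_tmul, LinearMap.zero_apply, Submodule.subtype_apply,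
    pi_eq_sum_univ' x.1, TensorProduct.sum_tmul]
  refine Finset.sum_eq_zero fun i _ => ?_
  rw [TensorProduct.smul_tmul]
  have : x.1 i • y = 0 := by
    obtain ⟨p, rfl⟩ := Ideal.Quotient.mk_surjective y
    change Ideal.Quotient.mk _ (x.1 i * p) = 0
    rw [Ideal.Quotient.eq_zero_iff_mem]
    exact Ideal.mul_mem_right _ _ (mem_max _ (hN _ x.2 i))
  rw [this, TensorProduct.tmul_zero]

/-- tensoring with the residue field does not see a submodule of the maximal ideal -/
lemma tensor_quot_equiv {q : ℕ}
    (L : Submodule (MvPolynomial (Fin n) k) (Fin q → MvPolynomial (Fin n) k)) (hL : InMax L) :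
    Nonempty (TensorProduct (MvPolynomial (Fin n) k) ((Fin q → MvPolynomial (Fin n) k) ⧸ L)
      (resid n k) ≃ₗ[MvPolynomial (Fin n) k] (Fin q → resid n k)) := by
  have hex : Function.Exact (L.subtype.rTensor (resid n k)) (L.mkQ.rTensor (resid n k)) :=
    rTensor_exact _ (LinearMap.exact_subtype_mkQ L) (Submodule.mkQ_surjective L)
  rw [rTensor_zero L hL] at hex
  have hinj : Function.Injective (L.mkQ.rTensor (resid n k)) := by
    rw [← LinearMap.ker_eq_bot, LinearMap.exact_iff.1 hex, LinearMap.range_zero]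
  have e1 := LinearEquiv.ofBijective (L.mkQ.rTensor (resid n k))
    ⟨hinj, LinearMap.rTensor_surjective _ (Submodule.mkQ_surjective L)⟩
  exact ⟨e1.symm ≪≫ₗ TensorProduct.comm _ _ _ ≪≫ₗ
    TensorProduct.piScalarRight (MvPolynomial (Fin n) k) (MvPolynomial (Fin n) k) (resid n k) (Fin q)⟩

lemma main_induction (a : ℕ) : ∀ (r : ℕ) (d : Fin r → ℕ)
    (N : Submodule (MvPolynomial (Fin n) k) (Fin r → MvPolynomial (Fin n) k)),
    Homog d N → InMax N →
    kdim (((Tor (ModuleCat (MvPolynomial (Fin n) k)) (a+1)).obj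
      (ModuleCat.of _ ((Fin r → MvPolynomial (Fin n) k) ⧸ N))).obj (resid n k)) = 1 →
    HasRes (ModuleCat.of (MvPolynomial (Fin n) k) ((Fin r → MvPolynomial (Fin n) k) ⧸ N))
      (a+1) := by
  induction a with
  | zero =>
    intro r d N hN hmax hk
    obtain ⟨q, e, φ, hφ, hφ1, hφ2⟩ := exists_cover d N hN
    have hS := mkShortExact N.subtype N.mkQ N.injective_subtype (Submodule.mkQ_surjective _)
      (LinearMap.exact_subtype_mkQ N)
    subst hφ
    have hf : (ModuleCat.ofHom (LinearMap.range φ).subtype) ▷ (resid n k) = 0 := by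
      ext1
      exact rTensor_zero _ hmax
    rw [kdim_iso (torOne _ hS (resid n k) hf)] at hk
    obtain ⟨e2⟩ := tensor_quot_equiv _ hφ2
    have e1 := φ.quotKerEquivRange
    have e3 := (TensorProduct.congr e1 (LinearEquiv.refl _ (resid n k))).symm ≪≫ₗ e2
    rw [kdim_iso (W := ModuleCat.of _ _) e3.toModuleIso] at hk
    obtain rfl := kdim_pi q hk
    have hproj : Module.Projective (MvPolynomial (Fin n) k) (LinearMap.range φ) := by
      by_cases h0 : φ = 0
      · subst h0
        rw [LinearMap.range_zero]
        infer_instance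
      · have hinj : Function.Injective φ := by
          rw [← LinearMap.ker_eq_bot, LinearMap.ker_eq_bot']
          intro c hc
          have h1 : ∀ c : Fin 1 → MvPolynomial (Fin n) k, φ c = c 0 • φ (fun _ => 1) := by
            intro c
            rw [← map_smul]
            congr 1
            funext i
            fin_cases i
            simp
          rw [h1, smul_eq_zero] at hc
          rcases hc with hc | hc
          · funext i
            fin_cases i
            exact hc
          · exfalso
            apply h0
            refine LinearMap.ext fun c => ?_
            rw [h1, hc, smul_zero, LinearMap.zero_apply]
        exact Module.Projective.of_equiv (LinearEquiv.ofInjective φ hinj)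
    have := (IsProjective.iff_projective (R := MvPolynomial (Fin n) k) _).1 hproj
    have : Projective (ModuleCat.of (MvPolynomial (Fin n) k) (Fin r → MvPolynomial (Fin n) k)) :=
      (IsProjective.iff_projective (R := MvPolynomial (Fin n) k) _).1 inferInstance
    exact HasRes.splice _ hS (hasRes_zero _)
  | succ a ih =>
    intro r d N hN hmax hk
    obtain ⟨q, e, φ, hφ, hφ1, hφ2⟩ := exists_cover d N hN
    have hS := mkShortExact N.subtype N.mkQ N.injective_subtype (Submodule.mkQ_surjective _)
      (LinearMap.exact_subtype_mkQ N)
    subst hφ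
    have : Projective (ModuleCat.of (MvPolynomial (Fin n) k) (Fin r → MvPolynomial (Fin n) k)) :=
      (IsProjective.iff_projective (R := MvPolynomial (Fin n) k) _).1 inferInstance
    refine HasRes.splice _ hS ?_
    refine HasRes.of_iso (φ.quotKerEquivRange.toModuleIso) ?_
    refine ih q e _ hφ1 hφ2 ?_
    rw [kdim_iso (((Tor _ (a+1)).mapIso (φ.quotKerEquivRange.toModuleIso)).app (resid n k))]
    rw [kdim_iso (torShift _ hS (resid n k) a)] at hk
    exact hk

end betti

end BettiOne

/-- If `M` is a nonzero proper monomial ideal of `S = k[x_1,…,x_n]` and `β_j(S/M) = 1` for some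
`1 ≤ j ≤ n`, then `pd(S/M) = j`. -/
theorem pd_eq_of_betti_eq_one (n : ℕ) (k : Type) [Field k]
    (A : Set (Fin n → ℕ)) (M : Ideal (MvPolynomial (Fin n) k)) (hM : M = monIdeal k A)
    (hne : M ≠ ⊥) (hproper : M ≠ ⊤)
    (j : ℕ) (hj1 : 1 ≤ j) (hjn : j ≤ n) (hb : betti k M j = 1) :
    pdQuot k M = (j : ℕ∞) := by
  obtain ⟨a, rfl⟩ : ∃ a, j = a + 1 := ⟨j - 1, by omega⟩
  -- membership in `M` only depends on the support
  have hmem : ∀ x y : MvPolynomial (Fin n) k, x ∈ M → y.support ⊆ x.support → y ∈ M := by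
    have key : M = Ideal.span ((fun s => monomial s (1 : k)) ''
        (Finsupp.equivFunOnFinite.symm '' A)) := by
      rw [hM, monIdeal, Set.image_image]
      rfl
    intro x y hx hxy
    rw [key, mem_ideal_span_monomial_image] at hx ⊢
    exact fun xi hxi => hx xi (hxy hxi)
  have hcomp : ∀ x ∈ M, ∀ t, homogeneousComponent t x ∈ M := by
    intro x hx t
    refine hmem x _ hx ?_
    intro m hm
    rw [mem_support_iff, coeff_homogeneousComponent] at hm
    rw [mem_support_iff]
    exact fun h => hm (by rw [h, ite_self])
  have hmax : ∀ x ∈ M, coeff 0 x = 0 := by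
    intro x hx
    by_contra h
    apply hproper
    have h1 := hcomp x hx 0
    rw [homogeneousComponent_zero] at h1
    refine Ideal.eq_top_of_isUnit_mem _ h1 ((isUnit_iff_ne_zero.2 h).map C)
  let u := LinearEquiv.funUnique (Fin 1) (MvPolynomial (Fin n) k) (MvPolynomial (Fin n) k)
  let N : Submodule (MvPolynomial (Fin n) k) (Fin 1 → MvPolynomial (Fin n) k) :=
    Submodule.comap u.toLinearMap M
  have hN : ∀ x, x ∈ N ↔ x 0 ∈ M := fun x => Iff.rfl
  have e : ((Fin 1 → MvPolynomial (Fin n) k) ⧸ N) ≃ₗ[MvPolynomial (Fin n) k]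
      (MvPolynomial (Fin n) k ⧸ M) :=
    Submodule.Quotient.equiv N M u (Submodule.map_comap_eq_of_surjective u.surjective _)
  have hN1 : BettiOne.Homog (fun _ => 0) N := by
    intro x hx t
    rw [hN, BettiOne.hcomp_apply, if_pos (Nat.zero_le _)]
    exact hcomp _ hx _
  have hN2 : BettiOne.InMax N := by
    intro x hx i
    fin_cases i
    exact hmax _ hx
  have hres := BettiOne.main_induction a 1 (fun _ => 0) N hN1 hN2 (by
    rw [BettiOne.kdim_iso (((Tor _ (a+1)).mapIso e.toModuleIso).app (BettiOne.resid n k))]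
    exact hb)
  obtain ⟨P, hP⟩ := BettiOne.HasRes.of_iso e.toModuleIso hres
  apply le_antisymm
  · refine sInf_le ⟨P, fun i hi => hP i ?_⟩
    exact_mod_cast hi
  · refine le_sInf ?_
    rintro d ⟨Q, hQ⟩
    by_contra hlt
    have h0 := BettiOne.tor_zero_of_resolution _ (BettiOne.resid n k) Q a
      (hQ (a+1) (not_le.1 hlt))
    have h1 := BettiOne.kdim_zero h0
    have h2 : (0:ℕ) = 1 := h1.symm.trans hb
    omega
end
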